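/- Let l be a positive integer, λ a partition with ℓ(λ) ≤ l, and ζ a primitive l-th root of unity. Then the specialization P_λ(1, ζ, ζ², …, ζ^{l−1}; q, ζ) equals (−1)^{(l−1)r} if λ = (r^l) is a rectangle with l parts all equal to some r ≥ 0, and equals 0 otherwise. -/

import Mathlib

open MvPolynomial

noncomputable section MacdonaldPreliminaries

/-! ### Base fields: `KK = ℂ(q)` and `FF = ℂ(q)(t)` -/

/-- The field `ℂ(q)` of rational functions in the indeterminate `q`. -/
abbrev KK : Type := RatFunc ℂ

/-- The field `ℂ(q)(t) = ℂ(q,t)`, rational functions in `t` over `ℂ(q)`. -/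
abbrev FF : Type := RatFunc KK

/-- The indeterminate `q`, as an element of `ℂ(q)`. -/
def qK : KK := RatFunc.X

/-- The indeterminate `q`, as an element of `ℂ(q,t)`. -/
def qF : FF := RatFunc.C qK

/-- The indeterminate `t`, as an element of `ℂ(q,t)`. -/
def tF : FF := RatFunc.X

/-! ### The ring of symmetric functions

We model the ring `Λ_R` of symmetric functions over `R` as the free commutative
`R`-algebra on the power sums `p₁, p₂, p₃, …`, i.e. as the polynomial ring in
countably many variables `X k`, `k : ℕ+`, where `X k` represents the power sum `p_k`. -/

/-- The ring of symmetric functions over `R`: polynomials in the power sums `p_k = X k`. -/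
abbrev SymFn (R : Type) [CommSemiring R] : Type := MvPolynomial ℕ+ R

section Core

variable {R : Type} [Field R]

/-- The power sum `p_d` for `d : ℕ`, with `p_0 = 1` by convention. -/
def pN (d : ℕ) : SymFn R := if h : 0 < d then X (⟨d, h⟩ : ℕ+) else 1

/-- `p_λ = ∏ p_{λᵢ}` for a partition `λ` given as a multiset of positive parts. -/
def pPar (lam : Multiset ℕ+) : SymFn R := (lam.map fun k => (X k : SymFn R)).prod

/-- The complete homogeneous symmetric functions, defined by Newton's recursion
`n·h_n = ∑_{i=1}^n p_i · h_{n-i}` with `h_0 = 1`. -/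
def hsym : ℕ → SymFn R
  | 0 => 1
  | (n+1) => (((n : R) + 1)⁻¹) • ∑ i ∈ Finset.range (n+1),
      (X (⟨i+1, Nat.succ_pos i⟩ : ℕ+) : SymFn R) * hsym (n - i)
decreasing_by exact Nat.lt_succ_of_le (Nat.sub_le n i)

/-- `h_z` for an integer index, vanishing for negative `z` (used in Jacobi–Trudi). -/
def hInt (z : ℤ) : SymFn R := if 0 ≤ z then hsym (R := R) z.toNat else 0

/-- The parts of a partition (a multiset of positive integers), sorted decreasingly. -/
def descParts (lam : Multiset ℕ+) : List ℕ :=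
  ((lam.map fun a : ℕ+ => (a : ℕ)).sort (· ≤ ·)).reverse

/-- The weight `|λ|` of a partition. -/
def wt (lam : Multiset ℕ+) : ℕ := (lam.map fun a : ℕ+ => (a : ℕ)).sum

/-- The Schur function `s_λ`, via the Jacobi–Trudi formula
`s_λ = det(h_{λᵢ - i + j})₁≤i,j≤ℓ`. -/
def schur (lam : Multiset ℕ+) : SymFn R :=
  Matrix.det (Matrix.of fun i j : Fin (Multiset.card lam) =>
    hInt (R := R) ((((descParts lam).getD i 0 : ℕ) : ℤ) + (j : ℤ) - (i : ℤ)))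

/-- `h_ν = ∏ h_{νⱼ}` for a partition `ν`. -/
def hPar (nu : Multiset ℕ+) : SymFn R := (nu.map fun a => hsym (R := R) (a : ℕ)).prod

/-! ### Inner products -/

/-- The `(q,t)`-deformed weight `z_λ(q,t)` attached to the monomial `∏ (X k)^(m k)`,
namely `∏_k (m k)! · k^(m k) · ((1-q^k)/(1-t^k))^(m k)`. -/
def zwtQT (q t : R) (m : ℕ+ →₀ ℕ) : R :=
  ∏ k ∈ m.support,
    ((Nat.factorial (m k) : R) * ((k : ℕ) : R) ^ (m k) *
      ((1 - q ^ (k : ℕ)) / (1 - t ^ (k : ℕ))) ^ (m k))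

/-- The Macdonald inner product `⟨·,·⟩_{q,t}`, defined on the power sum basis by
`⟨p_λ, p_μ⟩_{q,t} = δ_{λμ} z_λ(q,t)`. -/
def innerQT (q t : R) (f g : SymFn R) : R :=
  ∑ m ∈ f.support, MvPolynomial.coeff m f * MvPolynomial.coeff m g * zwtQT q t m

/-- The classical weight `z_λ = ∏_k (m k)! k^(m k)` attached to a monomial. -/
def zwtH (m : ℕ+ →₀ ℕ) : R :=
  ∏ k ∈ m.support, ((Nat.factorial (m k) : R) * ((k : ℕ) : R) ^ (m k))

/-- The standard Hall inner product, `⟨p_λ, p_μ⟩ = δ_{λμ} z_λ`. -/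
def innerH (f g : SymFn R) : R :=
  ∑ m ∈ f.support, MvPolynomial.coeff m f * MvPolynomial.coeff m g * zwtH (R := R) m

/-- The internal (Kronecker) product `⋆`, determined by `p_λ ⋆ p_μ = δ_{λμ} z_λ p_λ`. -/
def star (f g : SymFn R) : SymFn R :=
  ∑ m ∈ f.support,
    MvPolynomial.monomial m (MvPolynomial.coeff m f * MvPolynomial.coeff m g * zwtH (R := R) m)

/-! ### Dominance order and the Macdonald basis -/

/-- Sum of the `k` largest parts of `λ`. -/
def pSum (lam : Multiset ℕ+) (k : ℕ) : ℕ := ((descParts lam).take k).sum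

/-- `μ` is strictly dominated by `λ`: same weight, `μ ≠ λ`, and all partial sums of the
decreasingly sorted parts of `μ` are at most those of `λ`. -/
def StrictDom (mu lam : Multiset ℕ+) : Prop :=
  mu ≠ lam ∧ wt mu = wt lam ∧ ∀ k, pSum mu k ≤ pSum lam k

/-- Characterization of the Macdonald basis `P_λ(x;q,t)` (obtained from the Schur basis by
Gram–Schmidt orthogonalization w.r.t. `⟨·,·⟩_{q,t}`): `P_λ` is unitriangular with respect to
the Schur functions of strictly dominated partitions, and the `P_λ` are pairwise orthogonal. -/
def IsMacdonaldBasis (q t : R) (P : Multiset ℕ+ → SymFn R) : Prop :=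
  (∀ lam, P lam - schur lam ∈
      Submodule.span R ((schur (R := R)) '' {mu | StrictDom mu lam})) ∧
  (∀ lam mu, lam ≠ mu → innerQT q t (P lam) (P mu) = 0)

/-- `Q_λ = P_λ / ⟨P_λ, P_λ⟩_{q,t}`. -/
def Qfam (q t : R) (P : Multiset ℕ+ → SymFn R) (lam : Multiset ℕ+) : SymFn R :=
  (innerQT q t (P lam) (P lam))⁻¹ • P lam

/-- The algebra endomorphism of `Λ_R` rescaling each power sum: `p_k ↦ g k · p_k`. -/
def scaleHom (g : ℕ+ → R) : SymFn R →ₐ[R] SymFn R :=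
  aeval fun k : ℕ+ => (C (g k) * X k : SymFn R)

/-- The modified Macdonald polynomial `Q'_λ(x;q,t) = Q_λ(((1-q)/(1-t))·x; q,t)`,
the image of `Q_λ` under `p_k ↦ ((1-q^k)/(1-t^k))·p_k`. -/
def Qprime (q t : R) (P : Multiset ℕ+ → SymFn R) (lam : Multiset ℕ+) : SymFn R :=
  scaleHom (fun k => (1 - q ^ (k : ℕ)) / (1 - t ^ (k : ℕ))) (Qfam q t P lam)

/-! ### Plethysm -/

/-- Plethysm by the power sum on the left: `p_l ∘ f`, the ring endomorphism `p_k ↦ p_{lk}`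
applied to `f`. -/
def plethP (l : ℕ+) : SymFn R →ₐ[R] SymFn R :=
  aeval fun k : ℕ+ => (X (l * k) : SymFn R)

/-- General plethysm `g ∘ f`: the algebra homomorphism in `g` sending `p_k` to `p_k ∘ f`. -/
def pleth (g f : SymFn R) : SymFn R :=
  aeval (fun k : ℕ+ => plethP k f) g

/-! ### Cells of a partition: arms, legs, the constants `c_μ`, `c'_μ` and `n(μ)` -/

/-- Arm length of the (0-indexed) cell `(i,j)` of `λ`: `λ_i - j - 1`. -/
def armM (lam : Multiset ℕ+) (i j : ℕ) : ℕ := (descParts lam).getD i 0 - (j + 1)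

/-- Leg length of the (0-indexed) cell `(i,j)` of `λ`: the number of cells below it
in the same column. -/
def legM (lam : Multiset ℕ+) (i j : ℕ) : ℕ :=
  ((List.range (descParts lam).length).filter
    (fun i' => decide (i < i') && decide (j < (descParts lam).getD i' 0))).length

/-- Product of a quantity over all cells of the partition `λ`. -/
def cellProd {S : Type} [CommMonoid S] (lam : Multiset ℕ+) (f : ℕ → ℕ → S) : S :=
  ∏ i ∈ Finset.range (descParts lam).length,
    ∏ j ∈ Finset.range ((descParts lam).getD i 0), f i j

/-- `c_μ(q,t) = ∏_{s∈μ} (1 - q^{a(s)} t^{l(s)+1})`. -/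
def cLow (q t : R) (lam : Multiset ℕ+) : R :=
  cellProd lam fun i j => 1 - q ^ (armM lam i j) * t ^ (legM lam i j + 1)

/-- `c'_μ(q,t) = ∏_{s∈μ} (1 - q^{a(s)+1} t^{l(s)})`. -/
def cUp (q t : R) (lam : Multiset ℕ+) : R :=
  cellProd lam fun i j => 1 - q ^ (armM lam i j + 1) * t ^ (legM lam i j)

/-- `n(λ) = ∑ (i-1)·λ_i`. -/
def nInv (lam : Multiset ℕ+) : ℕ :=
  ∑ i ∈ Finset.range (descParts lam).length, i * (descParts lam).getD i 0

/-- The modified Macdonald polynomial of Haglund–Haiman–Loehr,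
`H̃_μ(x;q,t) = t^{n(μ)} J_μ(x/(1-t⁻¹); q, t⁻¹)`, where `J_μ(x;q,t) = c_μ(q,t) P_μ(x;q,t)`
and `Pinv` is the Macdonald basis at parameters `(q, t⁻¹)`. -/
def Htilde (q t : R) (Pinv : Multiset ℕ+ → SymFn R) (lam : Multiset ℕ+) : SymFn R :=
  C (t ^ nInv lam) *
    scaleHom (fun k => (1 - (t⁻¹) ^ (k : ℕ))⁻¹) (C (cLow q t⁻¹ lam) * Pinv lam)

/-! ### Cyclic characters -/

/-- The Ramanujan (Von Sterneck) sum `c(j,d)`: the sum of the `j`-th powers of the primitive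
`d`-th roots of unity (computed in the domain `R`). -/
def cRam [IsDomain R] (j d : ℕ) : R := ∑ z ∈ primitiveRoots d R, z ^ j

/-- The Frobenius characteristic `l_k^{(j)} = (1/k) ∑_{d ∣ k} c(j,d) p_d^{k/d}` of the
representation of `S_k` induced from the `j`-th character of the cyclic subgroup generated
by a `k`-cycle. -/
def lchar [IsDomain R] (k j : ℕ) : SymFn R :=
  ((k : R))⁻¹ • ∑ d ∈ Nat.divisors k, (cRam (R := R) j d) • ((pN (R := R) d) ^ (k / d))

end Core

/-! ### Specialization `t = ζ` and evaluation maps -/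

/-- Evaluation of a rational function in `t` over `ℂ(q)` at a point `c : ℂ(q)`. -/
def evalT (c : KK) (x : FF) : KK := RatFunc.eval (RingHom.id KK) c x

/-- Coefficientwise specialization `t = c` of a symmetric function over `ℂ(q,t)`. -/
def specT (c : KK) (f : SymFn FF) : SymFn KK :=
  ∑ m ∈ f.support, MvPolynomial.monomial m (evalT c (MvPolynomial.coeff m f))

/-- Evaluation `f ↦ f(1, ζ, ζ², …, ζ^{l-1}; q, ζ)`: substitute the finite alphabet
`x_i = ζ^{i-1}` (`1 ≤ i ≤ l`) and then specialize `t = ζ`. -/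
def macEvalRoots (l : ℕ) (z : ℂ) (f : SymFn FF) : KK :=
  evalT (RatFunc.C z)
    ((aeval fun k : ℕ+ =>
        ∑ i ∈ Finset.range l, (RatFunc.C (RatFunc.C z) : FF) ^ (i * (k : ℕ))) f)

/-- Evaluation of a symmetric function over `ℂ(q,t)` at the finite alphabet
`(1, t, t², …, t^{l-1})`. -/
def evalAlphT (l : ℕ) : SymFn FF →ₐ[FF] FF :=
  aeval fun k : ℕ+ => ∑ i ∈ Finset.range l, tF ^ (i * (k : ℕ))

/-- Congruence to `0` modulo the cyclotomic polynomial `Φ_l(t)` for a rational function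
in `t`: `x = Φ_l(t) · (a/b)` with `b` coprime to `Φ_l`. -/
def CongrModPhi (l : ℕ) (x : FF) : Prop :=
  ∃ a b : Polynomial KK, IsCoprime b (Polynomial.cyclotomic l KK) ∧
    x = algebraMap (Polynomial KK) FF (Polynomial.cyclotomic l KK) *
      (algebraMap (Polynomial KK) FF a / algebraMap (Polynomial KK) FF b)

/-- The finite set of all partitions of `n`, as multisets of positive integers. -/
def partitionsOf (n : ℕ) : Finset (Multiset ℕ+) :=
  Finset.univ.image fun pi : Nat.Partition n =>
    pi.parts.attach.map fun a => (⟨a.1, pi.parts_pos a.2⟩ : ℕ+)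

end MacdonaldPreliminaries

noncomputable section

open MvPolynomial

/-!
Macdonald's `q`-difference operator `E` is self-adjoint for `⟨·,·⟩_{q,t}` and acts triangularly,
with respect to dominance, on Schur functions, so `P_λ` is an eigenvector of `E`. On symmetric
functions `E` reads `f ↦ [z⁰] f(x + (q - 1) z) · ∑ₘ hₘ((1 - t⁻¹) x) z⁻ᵐ`. At `t = ζ` and
`x = (1, ζ, …, ζ^{l-1})` the second factor becomes `1`, because `p_k(x) = 0` unless `ζ ^ k = 1`;
hence `E f` and `f` take the same value there whenever `f` has no pole at `t = ζ`, and the value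
of `P_λ` is killed by `ε_λ - 1`, where `ε_λ` is its eigenvalue.

If `λ` has at most `l` parts and is not a rectangle with `l` rows, then `ε_λ ≠ ε_μ` at `t = ζ` for
every `μ ≠ λ` below `λ` with at most `l` parts, and `ε_λ ≠ 1`: comparing powers of `q`, an
equality would make a sum of fewer than `l` consecutive powers of `ζ` vanish. Consequently `P_λ`
is regular at `t = ζ` modulo the Schur functions with more than `l` parts, which vanish in `l`
variables, and the value is `0`. If `λ = (r^l)`, every partition strictly below `λ` has more than
`l` parts, so `P_λ` takes the value of `s_λ`, which is `(∏ ζ^i)^r = (-1)^{(l-1)r}`.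
-/

namespace Macdonald

section DifferentialEquation

open PowerSeries (derivative rescale)

theorem isAddTorsionFree_of_algebra (R : Type*) {B : Type*} [Field R] [CharZero R] [CommRing B]
    [Algebra R B] : IsAddTorsionFree B :=
  letI := Module.compHom B (algebraMap ℚ R)
  .of_module_rat B

theorem eq_of_derivative_eq_mul {B : Type*} [CommRing B] [IsAddTorsionFree B]
    {S F G : PowerSeries B}
    (hF : derivative B F = S * F) (hG : derivative B G = S * G)
    (h0 : PowerSeries.constantCoeff F = PowerSeries.constantCoeff G) : F = G := by
  ext n
  induction n using Nat.strong_induction_on with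
  | _ n ih =>
    cases n with
    | zero => simpa using h0
    | succ n =>
      have hcoeff : PowerSeries.coeff n (derivative B F) =
          PowerSeries.coeff n (derivative B G) := by
        rw [hF, hG, PowerSeries.coeff_mul, PowerSeries.coeff_mul]
        refine Finset.sum_congr rfl fun p hp => ?_
        rw [ih p.2 (Finset.Nat.antidiagonal.snd_lt hp)]
      rw [PowerSeries.coeff_derivative, PowerSeries.coeff_derivative] at hcoeff
      apply nsmul_right_injective n.succ_ne_zero
      simpa [mul_comm] using hcoeff

theorem derivative_rescale {B : Type*} [CommSemiring B] (s : B) (F : PowerSeries B) :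
    derivative B (rescale s F) = PowerSeries.C s * rescale s (derivative B F) := by
  ext n
  simp only [PowerSeries.coeff_derivative, PowerSeries.coeff_rescale, PowerSeries.coeff_C_mul]
  ring

theorem rescale_mk_one_mul {B : Type*} [CommRing B] (x : B) :
    rescale x (PowerSeries.mk 1) * (1 - PowerSeries.C x * PowerSeries.X) = 1 := by
  rw [← PowerSeries.rescale_X, ← map_one (rescale x), ← map_sub, ← map_mul,
    PowerSeries.mk_one_mul_one_sub_eq_one, map_one]

theorem coeff_prod_one_sub_C_mul_X_of_card_lt {B ι : Type*} [CommRing B] (s : Finset ι)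
    (x : ι → B) {n : ℕ} (hn : s.card < n) :
    PowerSeries.coeff n (∏ i ∈ s, (1 - PowerSeries.C (x i) * PowerSeries.X)) = 0 := by
  have hcoe : ∏ i ∈ s, (1 - PowerSeries.C (x i) * PowerSeries.X) =
      ((∏ i ∈ s, (1 - Polynomial.C (x i) * Polynomial.X) : Polynomial B) : PowerSeries B) := by
    simp only [← Polynomial.coeToPowerSeries.ringHom_apply, map_prod, map_sub, map_mul, map_one]
    simp
  rw [hcoe, Polynomial.coeff_coe, Polynomial.coeff_eq_zero_of_natDegree_lt]
  refine (Polynomial.natDegree_prod_le s _).trans_lt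
    ((Finset.sum_le_card_nsmul s _ 1 ?_).trans_lt ?_)
  · exact fun i _ => by compute_degree
  · simpa using hn

end DifferentialEquation

/-! ### Complete symmetric functions at an alphabet given by its power sums -/

section CompleteSymmetric

open PowerSeries (derivative rescale)

variable (R : Type) [Field R] {B : Type*} [CommRing B] [Algebra R B]

/-- The complete symmetric function `h_z`, for an integer index `z`, at the virtual alphabet whose
`k`-th power sum is `c k`. -/
def hAt (c : ℕ+ → B) (z : ℤ) : B := aeval c (hInt (R := R) z)

/-- The generating series `∑ hₙ zⁿ = exp (∑ pₖ zᵏ / k)` at the virtual alphabet with power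
sums `c`. -/
def hSeries (c : ℕ+ → B) : PowerSeries B := .mk fun n => hAt R c n

/-- The series `∑ pₖ zᵏ⁻¹`, the logarithmic derivative of `hSeries`. -/
def pSeries (c : ℕ+ → B) : PowerSeries B := .mk fun n => c n.succPNat

/-- The power sums of the finite alphabet `x`. -/
def powerSums {ι : Type*} [Fintype ι] (x : ι → B) (k : ℕ+) : B := ∑ i, x i ^ (k : ℕ)

theorem hAt_of_neg (c : ℕ+ → B) {z : ℤ} (hz : z < 0) : hAt R c z = 0 := by
  simp [hAt, hInt, hz.not_ge]

theorem hAt_natCast (c : ℕ+ → B) (n : ℕ) : hAt R c n = aeval c (hsym (R := R) n) := by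
  simp [hAt, hInt]

theorem hAt_zero (c : ℕ+ → B) : hAt R c 0 = 1 := by
  simp [hAt, hInt, hsym]

theorem hAt_X (z : ℤ) : hAt R (X : ℕ+ → SymFn R) z = hInt z :=
  aeval_X_left_apply _

theorem map_hAt {B' : Type*} [CommRing B'] [Algebra R B'] (f : B →ₐ[R] B') (c : ℕ+ → B) (z : ℤ) :
    f (hAt R c z) = hAt R (f ∘ c) z := by
  rw [hAt, hAt, ← AlgHom.comp_apply, comp_aeval]
  rfl

theorem constantCoeff_hSeries (c : ℕ+ → B) : PowerSeries.constantCoeff (hSeries R c) = 1 := by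
  simp [hSeries, hAt_zero]

theorem pSeries_add (c d : ℕ+ → B) : pSeries (c + d) = pSeries c + pSeries d := rfl

variable [CharZero R]

theorem succ_mul_hAt_succ (c : ℕ+ → B) (n : ℕ) :
    ((n : B) + 1) * hAt R c (n + 1 : ℕ) =
      ∑ i ∈ Finset.range (n + 1), c i.succPNat * hAt R c (n - i : ℕ) := by
  have hrec : ((n : R) + 1) • hsym (R := R) (n + 1) =
      ∑ i ∈ Finset.range (n + 1), X i.succPNat * hsym (n - i) := by
    rw [hsym, smul_inv_smul₀ n.cast_add_one_ne_zero]
    rfl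
  simp only [hAt_natCast]
  simpa [Algebra.smul_def] using congrArg (aeval c) hrec

theorem derivative_hSeries (c : ℕ+ → B) :
    derivative B (hSeries R c) = pSeries c * hSeries R c := by
  ext n
  rw [PowerSeries.coeff_derivative, PowerSeries.coeff_mul,
    Finset.Nat.sum_antidiagonal_eq_sum_range_succ_mk, hSeries, PowerSeries.coeff_mk, mul_comm,
    succ_mul_hAt_succ]
  simp [pSeries]

theorem eq_hSeries {c : ℕ+ → B} {F : PowerSeries B} (h0 : PowerSeries.constantCoeff F = 1)
    (hF : derivative B F = pSeries c * F) : F = hSeries R c :=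
  have := isAddTorsionFree_of_algebra R (B := B)
  eq_of_derivative_eq_mul hF (derivative_hSeries R c) (h0.trans (constantCoeff_hSeries R c).symm)

theorem hSeries_add (c d : ℕ+ → B) : hSeries R (c + d) = hSeries R c * hSeries R d := by
  refine (eq_hSeries R (by simp [constantCoeff_hSeries]) ?_).symm
  rw [Derivation.leibniz, derivative_hSeries, derivative_hSeries, pSeries_add]
  simp only [smul_eq_mul]
  ring

theorem hSeries_zero : hSeries R (0 : ℕ+ → B) = 1 := by
  refine (eq_hSeries R (by simp) ?_).symm
  ext n
  simp [pSeries]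

theorem hAt_zero_alphabet (n : ℕ) : hAt R (0 : ℕ+ → B) n = if n = 0 then 1 else 0 := by
  rw [← PowerSeries.coeff_one, ← hSeries_zero R, hSeries, PowerSeries.coeff_mk]

theorem hSeries_sum {ι : Type*} (s : Finset ι) (c : ι → ℕ+ → B) :
    hSeries R (∑ i ∈ s, c i) = ∏ i ∈ s, hSeries R (c i) := by
  classical
  induction s using Finset.induction_on with
  | empty => simp [hSeries_zero]
  | insert a s ha ih => rw [Finset.sum_insert ha, Finset.prod_insert ha, hSeries_add, ih]

theorem hSeries_pow_mul (s : B) (c : ℕ+ → B) :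
    hSeries R (fun k => s ^ (k : ℕ) * c k) = rescale s (hSeries R c) := by
  have h0 : PowerSeries.constantCoeff (rescale s (hSeries R c)) = 1 := by
    simp [← PowerSeries.coeff_zero_eq_constantCoeff_apply, hSeries, hAt_zero]
  refine (eq_hSeries R h0 ?_).symm
  rw [derivative_rescale, derivative_hSeries, map_mul, ← mul_assoc]
  congr 1
  ext n
  simp only [pSeries, PowerSeries.coeff_C_mul, PowerSeries.coeff_rescale, PowerSeries.coeff_mk,
    Nat.succPNat_coe, Nat.succ_eq_add_one]
  ring

theorem hSeries_one : hSeries R (1 : ℕ+ → B) = .mk 1 := by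
  refine (eq_hSeries R (by simp) ?_).symm
  ext n
  simp [pSeries, PowerSeries.coeff_mul, PowerSeries.coeff_derivative]

theorem hSeries_pow (x : B) : hSeries R (fun k : ℕ+ => x ^ (k : ℕ)) = rescale x (.mk 1) := by
  simpa [hSeries_one] using hSeries_pow_mul R x 1

theorem hSeries_powerSums {ι : Type*} [Fintype ι] (x : ι → B) :
    hSeries R (powerSums x) = ∏ i, rescale (x i) (.mk 1) := by
  have hsum : powerSums x = ∑ i, fun k : ℕ+ => x i ^ (k : ℕ) := by
    ext k
    simp [powerSums]
  simp only [hsum, hSeries_sum, hSeries_pow]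

end CompleteSymmetric

/-! ### Jacobi–Trudi determinants and alternants -/

section JacobiTrudi

variable (R : Type) [Field R] {B : Type*} [CommRing B] [Algebra R B] {N : ℕ}

/-- The determinant `det (h_{aᵢ - N + 1 + j})`; for `a = λ + δ` it is the Jacobi–Trudi determinant
of `λ`, where the staircase `δ = (N - 1, …, 1, 0)` is `Fin.rev`. -/
def jacobiTrudi (c : ℕ+ → B) (a : Fin N → ℕ) : B :=
  Matrix.det <| .of fun i j : Fin N => hAt R c ((a i : ℤ) - (j.rev : ℕ))

/-- The alternant `det (xₖ ^ aᵢ)`. -/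
def alternant (x : Fin N → B) (a : Fin N → ℕ) : B :=
  Matrix.det <| .of fun i k : Fin N => x k ^ a i

theorem map_jacobiTrudi {B' : Type*} [CommRing B'] [Algebra R B'] (f : B →ₐ[R] B') (c : ℕ+ → B)
    (a : Fin N → ℕ) : f (jacobiTrudi R c a) = jacobiTrudi R (f ∘ c) a := by
  simp only [jacobiTrudi, AlgHom.map_det, ← map_hAt]
  rfl

theorem jacobiTrudi_rev (c : ℕ+ → B) : jacobiTrudi R c (fun i : Fin N => i.rev) = 1 := by
  rw [jacobiTrudi, Matrix.det_of_isUpperTriangular]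
  · simp [hAt_zero]
  · intro i j hij
    have hij : (j : ℕ) < i := hij
    refine hAt_of_neg R c ?_
    simp only [Fin.val_rev]
    omega

theorem jacobiTrudi_comp_perm (c : ℕ+ → B) (a : Fin N → ℕ) (σ : Equiv.Perm (Fin N)) :
    jacobiTrudi R c (a ∘ σ) = (Equiv.Perm.sign σ : ℤ) * jacobiTrudi R c a := by
  rw [jacobiTrudi, jacobiTrudi, ← Matrix.det_permute]
  rfl

theorem jacobiTrudi_eq_zero_of_not_injective (c : ℕ+ → B) {a : Fin N → ℕ}
    (ha : ¬ Function.Injective a) : jacobiTrudi R c a = 0 := by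
  obtain ⟨i, j, hij, hne⟩ := Function.not_injective_iff.1 ha
  exact Matrix.det_zero_of_row_eq hne (by ext; simp [hij])

theorem coeff_hSeries_mul (c : ℕ+ → B) {F : PowerSeries B} {n M : ℕ}
    (hF : ∀ j, M ≤ j → j ≤ n → PowerSeries.coeff j F = 0) :
    PowerSeries.coeff n (hSeries R c * F) =
      ∑ j ∈ Finset.range M, hAt R c ((n : ℤ) - j) * PowerSeries.coeff j F := by
  let term (j : ℕ) : B := hAt R c ((n : ℤ) - j) * PowerSeries.coeff j F
  have hcoeff : PowerSeries.coeff n (hSeries R c * F) = ∑ j ∈ Finset.range (n + 1), term j := by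
    rw [mul_comm, PowerSeries.coeff_mul, Finset.Nat.sum_antidiagonal_eq_sum_range_succ_mk]
    refine Finset.sum_congr rfl fun j hj => ?_
    have hj : j ≤ n := Nat.lt_succ_iff.1 (Finset.mem_range.1 hj)
    simp [term, hSeries, Nat.cast_sub hj, mul_comm]
  rw [hcoeff]
  trans ∑ j ∈ Finset.range (n + 1 + M), term j
  · refine Finset.sum_subset (Finset.range_mono (by omega)) fun j _ hj => ?_
    rw [Finset.mem_range, not_lt] at hj
    simp [term, hAt_of_neg R c (show (n : ℤ) - j < 0 by omega)]
  · refine (Finset.sum_subset (Finset.range_mono (by omega)) fun j _ hj => ?_).symm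
    rw [Finset.mem_range, not_lt] at hj
    rcases le_or_gt j n with hjn | hjn
    · simp [term, hF j hj hjn]
    · simp [term, hAt_of_neg R c (show (n : ℤ) - j < 0 by omega)]

variable [CharZero R]

theorem hSeries_powerSums_mul_prod_erase (x : Fin N → B) (k : Fin N) :
    hSeries R (powerSums x) *
      ∏ i ∈ Finset.univ.erase k, (1 - PowerSeries.C (x i) * PowerSeries.X) =
      PowerSeries.rescale (x k) (.mk 1) := by
  rw [hSeries_powerSums, ← Finset.mul_prod_erase _ _ (Finset.mem_univ k), mul_assoc,
    ← Finset.prod_mul_distrib]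
  simp [rescale_mk_one_mul]

/-- The alternant matrix factors as the Jacobi–Trudi matrix times a matrix that does not depend on
`a`; the exponent `a = δ` identifies the determinant of that second factor. -/
theorem jacobiTrudi_mul_alternant (x : Fin N → B) (a : Fin N → ℕ) :
    jacobiTrudi R (powerSums x) a * alternant x (fun i => i.rev) = alternant x a := by
  let F (k : Fin N) : PowerSeries B :=
    ∏ i ∈ Finset.univ.erase k, (1 - PowerSeries.C (x i) * PowerSeries.X)
  let M : Matrix (Fin N) (Fin N) B := .of fun j k => PowerSeries.coeff j.rev (F k)
  have hF (k : Fin N) (j : ℕ) (hj : N ≤ j) : PowerSeries.coeff j (F k) = 0 :=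
    coeff_prod_one_sub_C_mul_X_of_card_lt _ _ (by simpa using Nat.sub_one_lt_of_le k.pos hj)
  have hfactor (a : Fin N → ℕ) : jacobiTrudi R (powerSums x) a * M.det = alternant x a := by
    rw [jacobiTrudi, alternant, ← Matrix.det_mul]
    congr 1
    ext i k
    have hcoeff := coeff_hSeries_mul R (powerSums x) (n := a i) fun j hj _ => hF k j hj
    rw [hSeries_powerSums_mul_prod_erase, ← Fin.sum_univ_eq_sum_range fun j =>
      hAt R (powerSums x) (a i - j) * PowerSeries.coeff j (F k)] at hcoeff
    rw [Matrix.mul_apply, Matrix.of_apply]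
    trans PowerSeries.coeff (a i) (PowerSeries.rescale (x k) (.mk 1))
    · rw [hcoeff, ← Equiv.sum_comp Fin.revPerm]
      simp only [M, Matrix.of_apply, Fin.revPerm_apply, Fin.rev_rev]
    · simp
  rw [← hfactor, jacobiTrudi_rev, one_mul, hfactor]

theorem alternant_rev_ne_zero {B : Type*} [CommRing B] [IsDomain B] {x : Fin N → B}
    (hx : Function.Injective x) : alternant x (fun i => i.rev) ≠ 0 := by
  have hvan : Matrix.of (fun i k : Fin N => x k ^ (i.rev : ℕ)) =
      (Matrix.vandermonde x).transpose.submatrix Fin.revPerm id := by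
    ext i k
    simp [Matrix.vandermonde]
  rw [alternant, hvan, Matrix.det_permute, Matrix.det_transpose]
  refine mul_ne_zero ?_ (Matrix.det_vandermonde_ne_zero_iff.2 hx)
  exact ((Equiv.Perm.sign Fin.revPerm).isUnit.map (Int.castRingHom B)).ne_zero

end JacobiTrudi

/-! ### Restriction to finitely many variables, and straightening -/

section Degree

variable {R : Type} [Field R]

/-- `f` is a homogeneous symmetric function of degree `e`, where `p_k` has degree `k`. -/
abbrev HasDegree (f : SymFn R) (e : ℕ) : Prop :=
  IsWeightedHomogeneous (fun k : ℕ+ => (k : ℕ)) f e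

theorem aeval_mem_of_hasDegree {B : Type*} [CommRing B] [Algebra R B] (G : ℕ → Submodule R B)
    [SetLike.GradedMonoid G] {c : ℕ+ → B} (hc : ∀ k : ℕ+, c k ∈ G k) {f : SymFn R} {e : ℕ}
    (hf : HasDegree f e) : aeval c f ∈ G e := by
  rw [aeval_def, eval₂_eq]
  refine Submodule.sum_mem _ fun d hd => ?_
  rw [← Algebra.smul_def, ← hf (mem_support_iff.1 hd), Finsupp.weight_apply, Finsupp.sum]
  refine Submodule.smul_mem _ _ ?_
  simpa using SetLike.prod_pow_mem_graded G (fun k : ℕ+ => (k : ℕ)) c d fun k _ => hc k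

theorem hasDegree_hsym (n : ℕ) : HasDegree (hsym (R := R) n) n := by
  induction n using Nat.strong_induction_on with
  | _ n ih =>
    cases n with
    | zero =>
      rw [hsym]
      exact isWeightedHomogeneous_one _ _
    | succ n =>
      rw [hsym, smul_eq_C_mul]
      refine (IsWeightedHomogeneous.sum _ _ _ fun i hi => ?_).C_mul _
      have hi : i < n + 1 := Finset.mem_range.1 hi
      convert (isWeightedHomogeneous_X R (fun k : ℕ+ => (k : ℕ)) ⟨i + 1, i.succ_pos⟩).mul
        (ih (n - i) (by omega)) using 1
      rw [PNat.mk_coe]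
      omega

theorem hasDegree_prod_hInt {ι : Type*} (s : Finset ι) (z : ι → ℤ) {e : ℕ}
    (hz : ∑ i ∈ s, z i = e) : HasDegree (∏ i ∈ s, hInt (R := R) (z i)) e := by
  by_cases hneg : ∃ i ∈ s, z i < 0
  · obtain ⟨i, hi, hzi⟩ := hneg
    rw [Finset.prod_eq_zero hi (by simp [hInt, hzi.not_ge])]
    exact isWeightedHomogeneous_zero _ _ _
  · push Not at hneg
    have he : e = ∑ i ∈ s, (z i).toNat := by
      zify
      rw [← hz]
      exact Finset.sum_congr rfl fun i hi => (Int.toNat_of_nonneg (hneg i hi)).symm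
    rw [he]
    refine IsWeightedHomogeneous.prod _ _ _ fun i hi => ?_
    rw [hInt, if_pos (hneg i hi)]
    exact hasDegree_hsym _

theorem hasDegree_jacobiTrudi {N : ℕ} (a : Fin N → ℕ) {e : ℕ}
    (ha : ∑ i, a i = e + ∑ i : Fin N, (i.rev : ℕ)) :
    HasDegree (jacobiTrudi R (X : ℕ+ → SymFn R) a) e := by
  rw [jacobiTrudi, Matrix.det_apply]
  refine IsWeightedHomogeneous.sum _ _ _ fun σ _ => ?_
  have hsum : ∑ j, ((a (σ j) : ℤ) - (j.rev : ℕ)) = e := by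
    rw [Finset.sum_sub_distrib, Equiv.sum_comp σ fun i => (a i : ℤ), sub_eq_iff_eq_add]
    exact_mod_cast ha
  have hprod := hasDegree_prod_hInt (R := R) Finset.univ _ hsum
  simp only [Matrix.of_apply, hAt_X]
  rcases Int.units_eq_one_or (Equiv.Perm.sign σ) with hσ | hσ
  · rwa [hσ, one_smul]
  · rw [hσ, Units.neg_smul, one_smul]
    exact (weightedHomogeneousSubmodule R _ e).neg_mem hprod

end Degree

section PowerSums

variable (R : Type) [Field R] [CharZero R] (N : ℕ)

theorem esymm_mem_adjoin_psum (k : ℕ) :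
    k ≤ N → esymm (Fin N) R k ∈
      Algebra.adjoin R (Set.range fun j : Fin N => psum (Fin N) R (j + 1)) := by
  set A := Algebra.adjoin R (Set.range fun j : Fin N => psum (Fin N) R (j + 1))
  induction k using Nat.strong_induction_on with
  | _ k ih =>
    intro hk
    rcases Nat.eq_zero_or_pos k with rfl | hpos
    · simp
    have hnewton : (k : R) • esymm (Fin N) R k ∈ A := by
      rw [Nat.cast_smul_eq_nsmul, nsmul_eq_mul, mul_esymm_eq_sum]
      refine A.mul_mem (A.pow_mem (A.neg_mem A.one_mem) _) (A.sum_mem fun a ha => ?_)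
      simp only [Finset.mem_filter, Finset.HasAntidiagonal.mem_antidiagonal] at ha
      refine A.mul_mem (A.mul_mem (A.pow_mem (A.neg_mem A.one_mem) _) (ih _ ha.2 (by omega))) ?_
      obtain ⟨m, hm⟩ := Nat.exists_eq_add_of_lt (show 0 < a.2 by omega)
      exact Algebra.subset_adjoin ⟨⟨m, by omega⟩, by simp [show a.2 = m + 1 by omega]⟩
    rw [← inv_smul_smul₀ (Nat.cast_ne_zero.2 hpos.ne' : (k : R) ≠ 0) (esymm (Fin N) R k)]
    exact A.smul_mem hnewton _

theorem algebraicIndependent_psum :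
    AlgebraicIndependent R fun j : Fin N => psum (Fin N) R (j + 1) := by
  let S := symmetricSubalgebra (Fin N) R
  let p (j : Fin N) : S := ⟨psum (Fin N) R (j + 1), psum_isSymmetric _ _ _⟩
  have hadjoin : Algebra.adjoin R (Set.range p) = ⊤ := by
    rw [eq_top_iff, ← (AlgHom.range_eq_top _).2 (esymmAlgHom_surjective R (Fintype.card_fin N).le),
      esymmAlgHom, ← Algebra.adjoin_range_eq_range_aeval]
    refine Algebra.adjoin_le ?_
    rintro _ ⟨i, rfl⟩
    have hmem := esymm_mem_adjoin_psum R N (i + 1) i.2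
    rw [show (fun j : Fin N => psum (Fin N) R (j + 1)) = S.val ∘ p from rfl, Set.range_comp,
      ← AlgHom.map_adjoin] at hmem
    obtain ⟨x, hx, hxi⟩ := hmem
    rwa [show x = ⟨esymm (Fin N) R (i + 1), esymm_isSymmetric _ _ _⟩ from Subtype.ext hxi] at hx
  have : Algebra.IsAlgebraic (Algebra.adjoin R (Set.range p)) S := by
    rw [hadjoin]
    exact ⟨fun x => isAlgebraic_algebraMap (⟨x, trivial⟩ : (⊤ : Subalgebra R S))⟩
  have htrdeg : Cardinal.mk (Fin N) ≤ Algebra.trdeg R S := by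
    rw [← (esymmAlgEquiv (Fin N) R (Fintype.card_fin N)).trdeg_eq, trdeg_of_isDomain,
      Cardinal.lift_id]
  exact (Algebra.IsAlgebraic.isTranscendenceBasis_of_le_trdeg_of_finite R p htrdeg).1.map'
    (f := S.val) Subtype.val_injective

end PowerSums

section Restriction

variable (R : Type) [Field R] (N : ℕ)

/-- Restriction of symmetric functions to the variables `x₁, …, x_N`. -/
def restrict : SymFn R →ₐ[R] MvPolynomial (Fin N) R :=
  aeval (powerSums X)

variable {R N}

theorem isSymmetric_restrict (f : SymFn R) : (restrict R N f).IsSymmetric := fun σ => by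
  rw [restrict, ← AlgHom.comp_apply, comp_aeval]
  congr 2
  ext1 k
  exact psum_isSymmetric (Fin N) R k σ

theorem isHomogeneous_restrict {e : ℕ} {f : SymFn R} (hf : HasDegree f e) :
    (restrict R N f).IsHomogeneous e :=
  aeval_mem_of_hasDegree (homogeneousSubmodule (Fin N) R)
    (fun k => IsHomogeneous.sum _ _ _ fun i _ => by simpa using (isHomogeneous_X R i).pow (k : ℕ))
    hf

theorem exists_rename_of_hasDegree {e : ℕ} (he : e ≤ N) {f : SymFn R} (hf : HasDegree f e) :
    ∃ p : MvPolynomial (Fin N) R, rename (fun j : Fin N => (j : ℕ).succPNat) p = f := by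
  refine exists_rename_eq_of_vars_subset_range f _
    (Nat.succPNat_injective.comp Fin.val_injective) fun k hk => ?_
  obtain ⟨d, hd, hkd⟩ := mem_vars_iff_mem_support k |>.1 hk
  have hke : (k : ℕ) ≤ e := by
    rw [← hf (mem_support_iff.1 hd)]
    exact Finsupp.le_weight_of_ne_zero' _ (Finsupp.mem_support_iff.1 hkd)
  exact ⟨⟨k.natPred, by have := k.natPred_add_one; omega⟩, k.succPNat_natPred⟩

theorem eq_of_restrict_eq [CharZero R] {e : ℕ} (he : e ≤ N) {f g : SymFn R} (hf : HasDegree f e)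
    (hg : HasDegree g e) (h : restrict R N f = restrict R N g) : f = g := by
  obtain ⟨p, rfl⟩ := exists_rename_of_hasDegree he hf
  obtain ⟨p', rfl⟩ := exists_rename_of_hasDegree he hg
  rw [restrict, aeval_rename, aeval_rename] at h
  exact congrArg _ (algebraicIndependent_psum R N h)

variable (R N)

/-- The straightening map `x^α ↦ det (h_{αᵢ - i + j})`, the linear extension of the Jacobi–Trudi
formula to arbitrary exponent vectors. -/
def straighten : MvPolynomial (Fin N) R →ₗ[R] SymFn R :=
  (basisMonomials (Fin N) R).constr R fun α => jacobiTrudi R X fun i => α i + i.rev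

/-- The antisymmetrization `∑ sgn σ · σ(g)`. -/
def antisymmetrize : MvPolynomial (Fin N) R →ₗ[R] MvPolynomial (Fin N) R :=
  ∑ σ : Equiv.Perm (Fin N), (Equiv.Perm.sign σ : ℤ) • (rename σ).toLinearMap

variable {R N}

theorem straighten_monomial (α : Fin N →₀ ℕ) (r : R) :
    straighten R N (monomial α r) = r • jacobiTrudi R X fun i => α i + i.rev := by
  have hmon : (monomial α r : MvPolynomial (Fin N) R) = r • basisMonomials (Fin N) R α := by
    simp [smul_monomial]
  rw [hmon, map_smul, straighten, Module.Basis.constr_basis]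

theorem straighten_one : straighten R N 1 = 1 := by
  rw [← C_1, C_apply, straighten_monomial]
  simpa using jacobiTrudi_rev R X

theorem hasDegree_straighten {e : ℕ} {g : MvPolynomial (Fin N) R} (hg : g.IsHomogeneous e) :
    HasDegree (straighten R N g) e := by
  rw [g.as_sum, map_sum]
  refine IsWeightedHomogeneous.sum _ _ _ fun α hα => ?_
  rw [straighten_monomial, smul_eq_C_mul]
  refine (hasDegree_jacobiTrudi _ ?_).C_mul _
  rw [Finset.sum_add_distrib, ← hg (mem_support_iff.1 hα), Finsupp.weight_apply,
    Finsupp.sum_fintype _ _ (by simp)]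
  simp

theorem antisymmetrize_apply (g : MvPolynomial (Fin N) R) :
    antisymmetrize R N g = ∑ σ : Equiv.Perm (Fin N), (Equiv.Perm.sign σ : ℤ) • rename σ g := by
  simp [antisymmetrize]

theorem antisymmetrize_mul (g : MvPolynomial (Fin N) R) {f : MvPolynomial (Fin N) R}
    (hf : f.IsSymmetric) : antisymmetrize R N (g * f) = antisymmetrize R N g * f := by
  simp_rw [antisymmetrize_apply, Finset.sum_mul, map_mul, hf _, smul_mul_assoc]

theorem antisymmetrize_monomial (a : Fin N →₀ ℕ) (r : R) :
    antisymmetrize R N (monomial a r) = r • alternant X a := by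
  rw [antisymmetrize_apply, alternant, ← Matrix.det_transpose, Matrix.det_apply, Finset.smul_sum]
  refine Finset.sum_congr rfl fun σ _ => ?_
  rw [monomial_eq, Finsupp.prod_fintype _ _ (by simp)]
  simp [Units.smul_def, smul_eq_C_mul, mul_left_comm]

variable [CharZero R]

theorem restrict_straighten_mul_alternant (g : MvPolynomial (Fin N) R) :
    restrict R N (straighten R N g) * alternant X (fun i => i.rev) =
      antisymmetrize R N
        (g * monomial (Finsupp.equivFunOnFinite.symm fun i : Fin N => (i.rev : ℕ)) 1) := by
  induction g using MvPolynomial.induction_on' with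
  | monomial α r =>
    rw [monomial_mul, mul_one, antisymmetrize_monomial, straighten_monomial, map_smul,
      smul_mul_assoc, restrict, map_jacobiTrudi]
    simp only [Function.comp_def, aeval_X]
    rw [jacobiTrudi_mul_alternant]
    rfl
  | add g h hg hh => rw [map_add, map_add, add_mul, hg, hh, add_mul, map_add]

theorem restrict_straighten_mul (g : MvPolynomial (Fin N) R) {f : MvPolynomial (Fin N) R}
    (hf : f.IsSymmetric) :
    restrict R N (straighten R N (g * f)) = restrict R N (straighten R N g) * f := by
  apply mul_right_cancel₀ (alternant_rev_ne_zero (X_injective (σ := Fin N) (R := R)))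
  rw [restrict_straighten_mul_alternant, mul_right_comm, antisymmetrize_mul _ hf,
    ← restrict_straighten_mul_alternant, mul_right_comm]

theorem straighten_mul_restrict {a b : ℕ} (hN : a + b ≤ N) {g : MvPolynomial (Fin N) R}
    (hg : g.IsHomogeneous a) {f : SymFn R} (hf : HasDegree f b) :
    straighten R N (g * restrict R N f) = straighten R N g * f := by
  refine eq_of_restrict_eq hN (hasDegree_straighten (hg.mul (isHomogeneous_restrict hf)))
    ((hasDegree_straighten hg).mul hf) ?_
  rw [restrict_straighten_mul _ (isSymmetric_restrict f), map_mul]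

theorem straighten_restrict {e : ℕ} (he : e ≤ N) {f : SymFn R} (hf : HasDegree f e) :
    straighten R N (restrict R N f) = f := by
  simpa [straighten_one] using
    straighten_mul_restrict (by simpa using he) (isHomogeneous_one (Fin N) R) hf

end Restriction

/-! ### The Macdonald operator and its self-adjointness -/

section Newton

theorem sum_pderiv_C_mul_X_mul {R : Type} [CommRing R] (b : ℕ+ → R) (k : ℕ+) (f : ℕ → SymFn R)
    {n : ℕ} (hn : k ≤ n) :
    ∑ i ∈ Finset.range n, pderiv k (C (b i.succPNat) * X i.succPNat : SymFn R) * f i =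
      C (b k) * f k.natPred := by
  have hk := k.natPred_add_one
  rw [Finset.sum_eq_single_of_mem k.natPred (Finset.mem_range.2 (by omega)), k.succPNat_natPred]
  · simp
  · intro i _ hi
    have hne : i.succPNat ≠ k := fun h => hi (by rw [← h, Nat.natPred_succPNat])
    simp [pderiv_X_of_ne hne]

variable (R : Type) [Field R] [CharZero R] {B : Type*} [CommRing B] [Algebra R B]

theorem intCast_mul_hAt (c : ℕ+ → B) {z : ℤ} {N : ℕ} (hN : z ≤ N) :
    (z : B) * hAt R c z = ∑ i ∈ Finset.range N, c i.succPNat * hAt R c (z - 1 - i) := by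
  rcases le_or_gt z 0 with hz | hz
  · rw [Finset.sum_eq_zero fun i _ => by rw [hAt_of_neg R c (by omega), mul_zero]]
    rcases hz.eq_or_lt with rfl | hz
    · simp
    · rw [hAt_of_neg R c hz, mul_zero]
  · obtain ⟨n, rfl⟩ := Int.eq_succ_of_zero_lt hz
    push_cast
    trans ∑ i ∈ Finset.range (n + 1), c i.succPNat * hAt R c (n + 1 - 1 - i : ℤ)
    · have hrec := succ_mul_hAt_succ R c n
      push_cast at hrec ⊢
      rw [hrec]
      refine Finset.sum_congr rfl fun i hi => ?_
      rw [add_sub_cancel_right, Nat.cast_sub (Finset.mem_range_succ_iff.1 hi)]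
    · refine Finset.sum_subset (Finset.range_mono (by omega)) fun i _ hi => ?_
      rw [Finset.mem_range, not_lt] at hi
      rw [hAt_of_neg R c (by omega), mul_zero]

theorem natCast_mul_pderiv_hAt (b : ℕ+ → R) (k : ℕ+) (z : ℤ) :
    (k : SymFn R) * pderiv k (hAt R (fun j => C (b j) * X j : ℕ+ → SymFn R) z) =
      C (b k) * hAt R (fun j => C (b j) * X j : ℕ+ → SymFn R) (z - k) := by
  set c : ℕ+ → SymFn R := fun j => C (b j) * X j
  induction hn : z.toNat using Nat.strong_induction_on generalizing z with
  | _ n ih =>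
    rcases le_or_gt z 0 with hz | hz
    · rw [hAt_of_neg R c (show z - k < 0 by have := k.pos; omega)]
      rcases hz.eq_or_lt with rfl | hz
      · simp [hAt_zero]
      · simp [hAt_of_neg R c hz]
    have hsingle : ∑ i ∈ Finset.range (n + k), pderiv k (c i.succPNat) * hAt R c (z - 1 - i) =
        C (b k) * hAt R c (z - k) := by
      have hk := k.natPred_add_one
      rw [sum_pderiv_C_mul_X_mul b k _ (Nat.le_add_left _ _),
        show z - 1 - k.natPred = z - k by omega]
    have hrest : ∑ i ∈ Finset.range (n + k), c i.succPNat *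
        ((k : SymFn R) * pderiv k (hAt R c (z - 1 - i))) =
          C (b k) * (((z - k : ℤ) : SymFn R) * hAt R c (z - k)) := by
      rw [intCast_mul_hAt R c (N := n + k) (by omega), Finset.mul_sum]
      refine Finset.sum_congr rfl fun i _ => ?_
      rw [ih _ (by omega) _ rfl, show z - 1 - i - k = z - k - 1 - i by ring]
      ring
    have hz0 : (z : SymFn R) ≠ 0 := Int.cast_ne_zero.2 hz.ne'
    have hderiv := congrArg (pderiv k) (intCast_mul_hAt R c (N := n + k) (z := z) (by omega))
    simp only [Derivation.leibniz, map_sum, smul_eq_mul, Derivation.map_intCast, mul_zero, add_zero,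
      Finset.sum_add_distrib] at hderiv
    simp only [mul_comm (hAt _ _ _) (pderiv _ _), hsingle] at hderiv
    apply mul_left_cancel₀ hz0
    simp only [mul_left_comm _ (k : SymFn R), ← Finset.mul_sum] at hrest
    push_cast at hrest
    linear_combination (k : SymFn R) * hderiv + hrest

end Newton

section InnerProduct

variable {R : Type} [Field R] (q t : R)

/-- `innerQT` as a bilinear form. -/
def innerForm : LinearMap.BilinForm R (SymFn R) :=
  (basisMonomials ℕ+ R).constr R fun m => zwtQT q t m • lcoeff R m

theorem innerForm_monomial (a : ℕ+ →₀ ℕ) (r : R) (g : SymFn R) :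
    innerForm q t (monomial a r) g = r * (zwtQT q t a * coeff a g) := by
  have hmon : (monomial a r : SymFn R) = r • basisMonomials ℕ+ R a := by simp [smul_monomial]
  rw [hmon, map_smul, innerForm, Module.Basis.constr_basis]
  rfl

theorem innerForm_apply (f g : SymFn R) : innerForm q t f g = innerQT q t f g := by
  conv_lhs => rw [f.as_sum]
  simp only [map_sum, LinearMap.sum_apply, innerForm_monomial, innerQT]
  exact Finset.sum_congr rfl fun m _ => by ring

theorem innerForm_comm (f g : SymFn R) : innerForm q t f g = innerForm q t g f := by
  classical
  induction f using MvPolynomial.induction_on' with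
  | add f f' hf hf' => rw [map_add, map_add, LinearMap.add_apply, hf, hf']
  | monomial a r =>
    induction g using MvPolynomial.induction_on' with
    | add g g' hg hg' => rw [map_add, map_add, LinearMap.add_apply, hg, hg']
    | monomial b s =>
      rw [innerForm_monomial, innerForm_monomial, coeff_monomial, coeff_monomial]
      rcases eq_or_ne a b with rfl | hab
      · simp only [if_true]
        ring
      · simp [hab, hab.symm]

theorem innerForm_C (r : R) (f : SymFn R) : innerForm q t f (C r) = r * constantCoeff f := by
  rw [innerForm_comm, ← monomial_zero', innerForm_monomial, constantCoeff_eq]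
  simp [zwtQT]

variable {q t} in
theorem zwtQT_ne_zero [CharZero R] (hq : ∀ k : ℕ+, q ^ (k : ℕ) ≠ 1)
    (ht : ∀ k : ℕ+, t ^ (k : ℕ) ≠ 1) (a : ℕ+ →₀ ℕ) : zwtQT q t a ≠ 0 := by
  refine Finset.prod_ne_zero_iff.2 fun k _ => mul_ne_zero (mul_ne_zero ?_ ?_) (pow_ne_zero _ ?_)
  · exact Nat.cast_ne_zero.2 (Nat.factorial_ne_zero _)
  · exact pow_ne_zero _ (Nat.cast_ne_zero.2 k.ne_zero)
  · exact div_ne_zero (sub_ne_zero.2 (hq k).symm) (sub_ne_zero.2 (ht k).symm)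

variable {q t} in
theorem eq_zero_of_innerForm_eq_zero [CharZero R] (hq : ∀ k : ℕ+, q ^ (k : ℕ) ≠ 1)
    (ht : ∀ k : ℕ+, t ^ (k : ℕ) ≠ 1) {g : SymFn R} (h : ∀ f, innerForm q t f g = 0) : g = 0 := by
  ext a
  have ha := h (monomial a 1)
  rw [innerForm_monomial, one_mul] at ha
  exact (mul_eq_zero.1 ha).resolve_left (zwtQT_ne_zero hq ht a)

theorem zwtQT_add_single (a : ℕ+ →₀ ℕ) (k : ℕ+) :
    zwtQT q t (a + Finsupp.single k 1) =
      k * ((1 - q ^ (k : ℕ)) / (1 - t ^ (k : ℕ))) * (a k + 1) * zwtQT q t a := by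
  let w (j : ℕ+) (n : ℕ) : R :=
    n.factorial * (j : ℕ) ^ n * ((1 - q ^ (j : ℕ)) / (1 - t ^ (j : ℕ))) ^ n
  have hw (b : ℕ+ →₀ ℕ) : zwtQT q t b = w k (b k) * (b.erase k).prod w :=
    (Finsupp.mul_prod_erase' b k w fun j => by simp [w]).symm
  have herase : (a + Finsupp.single k 1).erase k = a.erase k := by simp
  rw [hw, hw a, herase]
  simp only [w, Finsupp.add_apply, Finsupp.single_eq_same, Nat.factorial_succ, pow_succ]
  push_cast
  ring

theorem innerForm_X_mul_right (k : ℕ+) (f g : SymFn R) :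
    innerForm q t f (X k * g) =
      k * ((1 - q ^ (k : ℕ)) / (1 - t ^ (k : ℕ))) * innerForm q t (pderiv k f) g := by
  induction g using MvPolynomial.induction_on' with
  | monomial a r =>
    rw [mul_comm (X k), X, monomial_mul, mul_one, innerForm_comm, innerForm_monomial,
      innerForm_comm, innerForm_monomial, zwtQT_add_single, coeff_pderiv]
    ring
  | add g g' hg hg' => rw [mul_add, map_add, map_add, hg, hg', mul_add]

end InnerProduct

section Shift

variable {A : Type} [CommRing A]

/-- The translation `p_k ↦ p_k + (q ^ k - 1) z ^ k`, i.e. plethystic substitution of the alphabet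
`x + (q - 1) z`; the letter `z` is the polynomial variable. -/
def shift (q : A) : SymFn A →ₐ[A] Polynomial (SymFn A) :=
  aeval fun k : ℕ+ =>
    Polynomial.C (X k) + Polynomial.C (C (q ^ (k : ℕ) - 1)) * Polynomial.X ^ (k : ℕ)

theorem coeff_shift_X_mul (q : A) (k : ℕ+) (f : SymFn A) (m : ℕ) :
    (shift q (X k * f)).coeff m = X k * (shift q f).coeff m +
      C (q ^ (k : ℕ) - 1) * if (k : ℕ) ≤ m then (shift q f).coeff (m - k) else 0 := by
  rw [map_mul, shift, aeval_X, add_mul, Polynomial.coeff_add, Polynomial.coeff_C_mul, mul_assoc,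
    Polynomial.coeff_C_mul, Polynomial.coeff_X_pow_mul']

theorem coeff_shift_zero (q : A) (f : SymFn A) : (shift q f).coeff 0 = f := by
  induction f using MvPolynomial.induction_on with
  | C r => simp [shift, Polynomial.algebraMap_apply]
  | add f g hf hg => rw [map_add, Polynomial.coeff_add, hf, hg]
  | mul_X f k hf => simp [mul_comm f, -map_mul, coeff_shift_X_mul, hf, k.ne_zero]

end Shift

section MacdonaldOperator

variable {R : Type} [Field R]

/-- `hₘ` of the alphabet `(1 - t⁻¹) x`. -/
def hScaled (t : R) (m : ℤ) : SymFn R :=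
  hAt R (fun k : ℕ+ => C (1 - t⁻¹ ^ (k : ℕ)) * X k : ℕ+ → SymFn R) m

/-- Macdonald's operator `f ↦ [z⁰] f (x + (q - 1) z) · ∑ₘ hₘ ((1 - t⁻¹) x) z⁻ᵐ`. -/
def macdonaldOp (q t : R) : SymFn R →ₗ[R] SymFn R :=
  Polynomial.lsum (fun m => LinearMap.mulRight R (hScaled t m)) ∘ₗ (shift q).toLinearMap

theorem macdonaldOp_eq_sum_range (q t : R) {f : SymFn R} {n : ℕ} (hn : (shift q f).natDegree < n) :
    macdonaldOp q t f = ∑ m ∈ Finset.range n, (shift q f).coeff m * hScaled t m :=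
  Polynomial.sum_over_range' _ (by simp) n hn

theorem constantCoeff_hScaled [CharZero R] (t : R) (m : ℕ) :
    constantCoeff (hScaled t m) = if m = 0 then 1 else 0 := by
  have hc : aeval (0 : ℕ+ → R) ∘ (fun k : ℕ+ => C (1 - t⁻¹ ^ (k : ℕ)) * X k : ℕ+ → SymFn R) =
      0 := by
    ext k
    simp
  rw [← hAt_zero_alphabet R, ← hc, ← map_hAt, aeval_zero]
  rfl

theorem pderiv_hScaled [CharZero R] (t : R) (k : ℕ+) (m : ℤ) :
    pderiv k (hScaled t m) = ((1 - t⁻¹ ^ (k : ℕ)) / k) • hScaled t (m - k) := by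
  have hk : (k : SymFn R) ≠ 0 := Nat.cast_ne_zero.2 k.ne_zero
  apply mul_left_cancel₀ hk
  rw [hScaled, natCast_mul_pderiv_hAt R, smul_eq_C_mul, ← mul_assoc, ← map_natCast C, ← C_mul,
    mul_div_cancel₀ _ (Nat.cast_ne_zero.2 k.ne_zero)]
  rfl

variable [CharZero R]

theorem innerForm_hScaled_mul (q : R) {t : R} (ht0 : t ≠ 0) (ht : ∀ k : ℕ+, t ^ (k : ℕ) ≠ 1)
    (m : ℕ) (f g : SymFn R) :
    innerForm q t (hScaled t m * f) g = t⁻¹ ^ m * innerForm q t f ((shift q g).coeff m) := by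
  induction g using MvPolynomial.induction_on generalizing m f with
  | C r =>
    rw [shift, aeval_C, innerForm_C, map_mul, constantCoeff_hScaled, Polynomial.algebraMap_apply,
      Polynomial.coeff_C]
    rcases eq_or_ne m 0 with rfl | hm
    · simpa using (innerForm_C q t r f).symm
    · simp [hm]
  | add g g' hg hg' => rw [map_add, map_add, hg, hg', Polynomial.coeff_add, map_add, mul_add]
  | mul_X g k ih =>
    have hk : (k : R) ≠ 0 := Nat.cast_ne_zero.2 k.ne_zero
    have htk : 1 - t ^ (k : ℕ) ≠ 0 := sub_ne_zero.2 (ht k).symm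
    have hlow : t⁻¹ ^ (k : ℕ) * innerForm q t (hScaled t (m - k) * f) g =
        t⁻¹ ^ m * innerForm q t f
          (if (k : ℕ) ≤ m then (shift q g).coeff (m - k) else 0) := by
      split_ifs with hkm
      · rw [← Nat.cast_sub hkm, ih, ← mul_assoc, ← pow_add, Nat.add_sub_cancel' hkm]
      · rw [hScaled, hAt_of_neg R _ (by omega), zero_mul, map_zero, map_zero]
        simp
    have hcoef : k * ((1 - q ^ (k : ℕ)) / (1 - t ^ (k : ℕ))) * ((1 - t⁻¹ ^ (k : ℕ)) / k) =
        (q ^ (k : ℕ) - 1) * t⁻¹ ^ (k : ℕ) := by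
      rw [inv_pow]
      field_simp
      ring
    rw [mul_comm g, coeff_shift_X_mul, innerForm_X_mul_right, Derivation.leibniz, pderiv_hScaled,
      smul_eq_mul, smul_eq_mul, mul_comm f, smul_mul_assoc, map_add, map_add, LinearMap.add_apply,
      map_smul, LinearMap.smul_apply, ih, innerForm_X_mul_right, ← smul_eq_C_mul, map_smul,
      smul_eq_mul, smul_eq_mul]
    linear_combination innerForm q t (hScaled t (m - k) * f) g * hcoef +
      (q ^ (k : ℕ) - 1) * hlow

theorem innerForm_macdonaldOp_left (q : R) {t : R} (ht0 : t ≠ 0) (ht : ∀ k : ℕ+, t ^ (k : ℕ) ≠ 1)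
    (f g : SymFn R) :
    innerForm q t (macdonaldOp q t f) g = innerForm q t f (macdonaldOp q t g) := by
  have hn := Nat.lt_succ_of_le (le_max_left (shift q f).natDegree (shift q g).natDegree)
  have hn' := Nat.lt_succ_of_le (le_max_right (shift q f).natDegree (shift q g).natDegree)
  rw [macdonaldOp_eq_sum_range q t hn, macdonaldOp_eq_sum_range q t hn', map_sum, map_sum,
    LinearMap.sum_apply]
  refine Finset.sum_congr rfl fun m _ => ?_
  rw [mul_comm, innerForm_hScaled_mul q ht0 ht, mul_comm _ (hScaled t m), innerForm_comm q t f,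
    innerForm_hScaled_mul q ht0 ht, innerForm_comm]

end MacdonaldOperator

section SingleVariable

theorem det_updateRow_of_mulVec_eq_single {n B : Type*} [Fintype n] [DecidableEq n] [CommRing B]
    {A : Matrix n n B} {v : n → B} {i : n} (h : A.mulVec v = Pi.single i 1) (b : n → B) :
    (A.updateRow i b).det = A.det * ∑ j, b j * v j := by
  have hadj : A.adjugate.col i = A.det • v := by
    rw [← Matrix.mulVec_single_one, ← h, Matrix.mulVec_mulVec, Matrix.adjugate_mul,
      Matrix.smul_mulVec, Matrix.one_mulVec]
  rw [← Matrix.cramer_transpose_apply, Matrix.cramer_eq_adjugate_mulVec,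
    ← Matrix.adjugate_transpose, Matrix.mulVec, dotProduct, Finset.mul_sum]
  refine Finset.sum_congr rfl fun j _ => ?_
  rw [Matrix.transpose_apply, ← Matrix.col_apply A.adjugate, hadj, Pi.smul_apply, smul_eq_mul]
  ring

theorem intCast_val_rev {N : ℕ} (j : Fin N) : ((j.rev : ℕ) : ℤ) = N - 1 - j := by
  rw [Fin.val_rev]
  omega

theorem straighten_X_pow_eq_det {R : Type} [Field R] {N m : ℕ} (i : Fin N) :
    straighten R N (X i ^ m) =
      ((Matrix.of fun r j : Fin N => (hInt ((j : ℤ) - r) : SymFn R)).updateRow i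
        fun j => hInt ((m : ℤ) + j - i)).det := by
  rw [X_pow_eq_monomial, straighten_monomial, one_smul, jacobiTrudi]
  congr 1
  ext1 r j
  rcases eq_or_ne r i with rfl | hr
  · simp only [Matrix.updateRow_self, Matrix.of_apply, hAt_X, Finsupp.single_eq_same]
    push_cast [intCast_val_rev]
    congr 1
    ring
  · simp only [Matrix.updateRow_ne hr, Matrix.of_apply, hAt_X, Finsupp.single_eq_of_ne hr,
      zero_add, intCast_val_rev]
    congr 1
    ring

variable (R : Type) [Field R] [CharZero R] {B : Type*} [CommRing B] [Algebra R B]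

theorem hSeries_mul_hSeries_neg (c : ℕ+ → B) : hSeries R c * hSeries R (-c) = 1 := by
  rw [← hSeries_add, add_neg_cancel, hSeries_zero]

theorem sum_hAt_mul_hAt_neg {N : ℕ} (c : ℕ+ → B) (r i : Fin N) :
    ∑ j : Fin N, hAt R c ((j : ℤ) - r) * hAt R (-c) ((i : ℤ) - j) = if r = i then 1 else 0 := by
  have hcoeff := coeff_hSeries_mul R (-c) (F := PowerSeries.X ^ (r : ℕ) * hSeries R c) (n := i)
    (M := N) fun j hj hji => absurd i.2 (by omega)
  rw [mul_left_comm, mul_comm (hSeries R (-c)), hSeries_mul_hSeries_neg, mul_one,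
    PowerSeries.coeff_X_pow, ← Fin.sum_univ_eq_sum_range fun j => hAt R (-c) ((i : ℤ) - j) *
      PowerSeries.coeff j (PowerSeries.X ^ (r : ℕ) * hSeries R c)] at hcoeff
  simp only [eq_comm (a := r), Fin.ext_iff, hcoeff]
  refine Finset.sum_congr rfl fun j _ => ?_
  rw [PowerSeries.coeff_X_pow_mul', mul_comm]
  split_ifs with hrj
  · simp [hSeries, Nat.cast_sub hrj]
  · rw [hAt_of_neg R c (by omega)]

variable {R}

theorem straighten_X_pow {N m : ℕ} (i : Fin N) :
    straighten R N (X i ^ m) = ∑ d ∈ Finset.range (i + 1), hInt (m - d) * hAt R (-X) d := by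
  let A : Matrix (Fin N) (Fin N) (SymFn R) := .of fun r j => hInt ((j : ℤ) - r)
  have hA : A.det = 1 := by
    rw [← jacobiTrudi_rev R (X : ℕ+ → SymFn R) (N := N), jacobiTrudi]
    congr 1
    ext1 r j
    simp only [A, Matrix.of_apply, hAt_X, intCast_val_rev]
    congr 1
    ring
  have hmul : A.mulVec (fun j => hAt R (-X) ((i : ℤ) - j)) = Pi.single i 1 := by
    ext1 r
    rw [Pi.single_apply, ← sum_hAt_mul_hAt_neg R X]
    simp only [hAt_X]
    rfl
  rw [straighten_X_pow_eq_det, det_updateRow_of_mulVec_eq_single hmul, hA, one_mul,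
    Fin.sum_univ_eq_sum_range fun j => hInt (R := R) ((m : ℤ) + j - i) * hAt R (-X) ((i : ℤ) - j)]
  trans ∑ j ∈ Finset.range (i + 1), hInt (R := R) ((m : ℤ) + j - i) * hAt R (-X) ((i : ℤ) - j)
  · refine (Finset.sum_subset (Finset.range_mono i.2) fun j _ hj => ?_).symm
    rw [Finset.mem_range, not_lt] at hj
    rw [hAt_of_neg R (-X) (by omega), mul_zero]
  · rw [← Finset.sum_range_reflect]
    refine Finset.sum_congr rfl fun d hd => ?_
    have hd : d ≤ i := Finset.mem_range_succ_iff.1 hd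
    congr 2 <;> omega

theorem sum_smul_straighten_X_pow {N m : ℕ} (t : R) (hm : m ≠ 0) (hN : m ≤ N) :
    ∑ i : Fin N, (t⁻¹ ^ (i : ℕ) - t⁻¹ ^ ((i : ℕ) + 1)) • straighten R N (X i ^ m) =
      hScaled t m := by
  set s := t⁻¹
  let a (d : ℕ) : SymFn R := hInt (m - d) * hAt R (-X) d
  have hcoeff (u : R) : ∑ d ∈ Finset.range (N + 1), u ^ d • a d =
      PowerSeries.coeff m
        (hSeries R X * PowerSeries.rescale (C u) (hSeries R (-X : ℕ+ → SymFn R))) := by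
    rw [coeff_hSeries_mul R X (M := N + 1) fun j hj hjm => absurd hj (by omega)]
    refine Finset.sum_congr rfl fun d _ => ?_
    rw [PowerSeries.coeff_rescale, hAt_X, hSeries, PowerSeries.coeff_mk, smul_eq_C_mul, C_pow]
    ring
  have htotal : ∑ d ∈ Finset.range (N + 1), a d = 0 := by
    simpa [hSeries_mul_hSeries_neg, PowerSeries.coeff_one, hm] using hcoeff 1
  have habel := Finset.sum_range_by_parts (fun d => s ^ d) a (N + 1)
  rw [htotal, smul_zero, zero_sub, Nat.add_sub_cancel, ← Finset.sum_neg_distrib, hcoeff,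
    ← hSeries_pow_mul, ← hSeries_add, hSeries, PowerSeries.coeff_mk] at habel
  simp only [straighten_X_pow]
  rw [Fin.sum_univ_eq_sum_range fun i => (s ^ i - s ^ (i + 1)) • ∑ d ∈ Finset.range (i + 1), a d]
  trans hAt R (X + fun k : ℕ+ => C s ^ (k : ℕ) * (-X : ℕ+ → SymFn R) k) m
  · simp only [habel, ← neg_smul, neg_sub]
  · rw [hScaled]
    congr 1
    ext1 k
    simp only [Pi.add_apply, Pi.neg_apply, s, map_sub, map_one, map_pow]
    ring

end SingleVariable

section Dilation

variable {R : Type} [Field R]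

theorem weight_add_eq_of_coeff_shift_ne_zero (q : R) {f : SymFn R} {e : ℕ} (hf : HasDegree f e)
    {m : ℕ} {s : ℕ+ →₀ ℕ} (h : coeff s ((shift q f).coeff m) ≠ 0) :
    Finsupp.weight (fun k : ℕ+ => (k : ℕ)) s + m = e := by
  let w : Option ℕ+ → ℕ := fun o => o.elim 1 fun k => k
  let φ : SymFn R →ₐ[R] MvPolynomial (Option ℕ+) R :=
    aeval fun k => X (some k) + C (q ^ (k : ℕ) - 1) * X none ^ (k : ℕ)
  have hφ : shift q f = optionEquivLeft R ℕ+ (φ f) := by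
    rw [← AlgEquiv.coe_toAlgHom, ← AlgHom.comp_apply]
    congr 1
    ext1 k
    simp [shift, φ, optionEquivLeft_apply]
  have hdeg : IsWeightedHomogeneous w (φ f) e := by
    have := WeightedHomogeneousSubmodule.gradedMonoid (R := R) (w := w)
    refine aeval_mem_of_hasDegree (weightedHomogeneousSubmodule R w) (fun k => ?_) hf
    refine (isWeightedHomogeneous_X R w (some k)).add (IsWeightedHomogeneous.C_mul ?_ _)
    simpa [w] using (isWeightedHomogeneous_X R w none).pow (k : ℕ)
  rw [hφ, optionEquivLeft_coeff_coeff] at h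
  rw [← hdeg h, Finsupp.weight_apply, Finsupp.weight_apply, Finsupp.sum_option_index_smul]
  simp [w, add_comm]

theorem hasDegree_coeff_shift (q : R) {f : SymFn R} {e m : ℕ} (hf : HasDegree f (m + e)) :
    HasDegree ((shift q f).coeff m) e := fun s hs => by
  have := weight_add_eq_of_coeff_shift_ne_zero q hf hs
  omega

theorem natDegree_shift_le (q : R) {f : SymFn R} {e : ℕ} (hf : HasDegree f e) :
    (shift q f).natDegree ≤ e := by
  refine Polynomial.natDegree_le_iff_coeff_eq_zero.2 fun m hm => ?_
  ext s
  by_contra h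
  have := weight_add_eq_of_coeff_shift_ne_zero q hf h
  omega

variable {N : ℕ}

/-- The dilation `xᵢ ↦ q xᵢ` of one variable. -/
def dilate (q : R) (i : Fin N) : MvPolynomial (Fin N) R →ₐ[R] MvPolynomial (Fin N) R :=
  aeval (Function.update X i (C q * X i))

theorem dilate_monomial (q : R) (i : Fin N) (α : Fin N →₀ ℕ) (r : R) :
    dilate q i (monomial α r) = q ^ α i • monomial α r := by
  have hpow (j : Fin N) : Function.update X i (C q * X i) j ^ α j =
      (if j = i then C (q ^ α i) else 1) * (X j : MvPolynomial (Fin N) R) ^ α j := by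
    rcases eq_or_ne j i with rfl | hj
    · simp [mul_pow]
    · simp [hj]
  rw [dilate, aeval_monomial, monomial_eq, Finsupp.prod_fintype _ _ (by simp),
    Finsupp.prod_fintype _ _ (by simp), Finset.prod_congr rfl fun j _ => hpow j,
    Finset.prod_mul_distrib, Finset.prod_ite_eq', if_pos (Finset.mem_univ i), smul_eq_C_mul,
    algebraMap_eq, mul_left_comm]

theorem dilate_restrict (q : R) (i : Fin N) (f : SymFn R) :
    dilate q i (restrict R N f) = ((shift q f).map (restrict R N : SymFn R →+* _)).eval (X i) := by
  induction f using MvPolynomial.induction_on with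
  | C r => simp [shift, Polynomial.algebraMap_apply, dilate, restrict]
  | add f g hf hg => simp only [map_add, Polynomial.map_add, Polynomial.eval_add, hf, hg]
  | mul_X f k hf =>
    rw [map_mul, map_mul, map_mul, Polynomial.map_mul, Polynomial.eval_mul, hf]
    congr 1
    have hdil (j : Fin N) : dilate q i (X j) ^ (k : ℕ) =
        X j ^ (k : ℕ) + if j = i then (C (q ^ (k : ℕ) - 1)) * X i ^ (k : ℕ) else 0 := by
      rcases eq_or_ne j i with rfl | hj
      · simp only [dilate, aeval_X, Function.update_self, if_true, mul_pow, C_sub, C_pow, C_1]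
        ring
      · simp [dilate, hj]
    simp [shift, restrict, powerSums, hdil, Finset.sum_add_distrib, Polynomial.eval_finsetSum]

/-- The eigenvalue on `x^α` of Macdonald's `q`-difference operator, where `s` stands for `t⁻¹`; it
is normalized so as to be stable when zeros are appended to `α`. -/
def eigenvalue {B : Type*} [CommRing B] (q s : B) (α : Fin N → ℕ) : B :=
  1 + ∑ i : Fin N, (s ^ (i : ℕ) - s ^ ((i : ℕ) + 1)) * (q ^ α i - 1)

theorem map_eigenvalue {B B' : Type*} [CommRing B] [CommRing B'] (f : B →+* B') (q s : B)
    (α : Fin N → ℕ) : f (eigenvalue q s α) = eigenvalue (f q) (f s) α := by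
  simp [eigenvalue]

theorem eigenvalue_sub_eigenvalue {B : Type*} [CommRing B] (q s : B) (α β : Fin N → ℕ) :
    eigenvalue q s α - eigenvalue q s β =
      (1 - s) * ∑ i : Fin N, s ^ (i : ℕ) * (q ^ α i - q ^ β i) := by
  rw [eigenvalue, eigenvalue, add_sub_add_left_eq_sub, ← Finset.sum_sub_distrib, Finset.mul_sum]
  exact Finset.sum_congr rfl fun i _ => by ring

variable (N) in
/-- The operator that is diagonal on monomials with eigenvalues `eigenvalue q t⁻¹`. -/
def diagonalOp (q t : R) : MvPolynomial (Fin N) R →ₗ[R] MvPolynomial (Fin N) R :=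
  .id + ∑ i : Fin N, (t⁻¹ ^ (i : ℕ) - t⁻¹ ^ ((i : ℕ) + 1)) • ((dilate q i).toLinearMap - .id)

theorem diagonalOp_monomial (q t : R) (α : Fin N →₀ ℕ) (r : R) :
    diagonalOp N q t (monomial α r) = eigenvalue q t⁻¹ α • monomial α r := by
  simp only [diagonalOp, eigenvalue, LinearMap.add_apply, LinearMap.sum_apply,
    LinearMap.smul_apply, LinearMap.sub_apply, LinearMap.id_apply, AlgHom.toLinearMap_apply,
    dilate_monomial, add_smul, one_smul, Finset.sum_smul, mul_smul, sub_smul (q ^ _)]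

variable [CharZero R]

theorem straighten_dilate_restrict_sub {e : ℕ} (hN : e ≤ N) (q : R) (i : Fin N) {f : SymFn R}
    (hf : HasDegree f e) :
    straighten R N (dilate q i (restrict R N f) - restrict R N f) =
      ∑ m ∈ Finset.range e, (shift q f).coeff (m + 1) * straighten R N (X i ^ (m + 1)) := by
  rw [dilate_restrict, Polynomial.eval_map, Polynomial.eval₂_eq_sum_range'
    _ (Nat.lt_succ_of_le (natDegree_shift_le q hf)), Finset.sum_range_succ', pow_zero, mul_one,
    coeff_shift_zero, RingHom.coe_coe, add_sub_cancel_right, map_sum]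
  refine Finset.sum_congr rfl fun m hm => ?_
  have hm : m + 1 ≤ e := Finset.mem_range.1 hm
  obtain ⟨b, rfl⟩ := Nat.exists_eq_add_of_le hm
  rw [mul_comm, mul_comm (Polynomial.coeff _ _)]
  exact straighten_mul_restrict hN (by simpa using (isHomogeneous_X R i).pow (m + 1))
    (hasDegree_coeff_shift q hf)

theorem macdonaldOp_eq_straighten {e : ℕ} (hN : e ≤ N) (q t : R) {f : SymFn R}
    (hf : HasDegree f e) :
    macdonaldOp q t f = straighten R N (diagonalOp N q t (restrict R N f)) := by
  rw [macdonaldOp_eq_sum_range q t (Nat.lt_succ_of_le (natDegree_shift_le q hf)),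
    Finset.sum_range_succ', coeff_shift_zero, Nat.cast_zero, hScaled, hAt_zero, mul_one, add_comm]
  simp only [diagonalOp, LinearMap.add_apply, LinearMap.sum_apply, LinearMap.smul_apply,
    LinearMap.sub_apply, LinearMap.id_apply, AlgHom.toLinearMap_apply, map_add, map_sum, map_smul,
    straighten_restrict hN hf, straighten_dilate_restrict_sub hN q _ hf, Finset.smul_sum]
  rw [Finset.sum_comm]
  congr 1
  refine Finset.sum_congr rfl fun m hm => ?_
  have hm : m + 1 ≤ e := Finset.mem_range.1 hm
  rw [← sum_smul_straighten_X_pow t m.succ_ne_zero (hm.trans hN), Finset.mul_sum]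
  exact Finset.sum_congr rfl fun i _ => mul_smul_comm _ _ _

end Dilation

/-! ### Rows of partitions and the dominance order -/

section Rows

/-- `row lam i` is the part `λ_{i+1}` of the partition `λ`, which is zero beyond its length. -/
def row (lam : Multiset ℕ+) (i : ℕ) : ℕ := (descParts lam).getD i 0

theorem pairwise_descParts (lam : Multiset ℕ+) : (descParts lam).Pairwise (· ≥ ·) := by
  rw [descParts, List.pairwise_reverse]
  exact Multiset.pairwise_sort _ _

theorem coe_descParts (lam : Multiset ℕ+) :
    (descParts lam : Multiset ℕ) = lam.map fun a : ℕ+ => (a : ℕ) := by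
  rw [descParts, Multiset.coe_reverse, Multiset.sort_eq]

theorem length_descParts (lam : Multiset ℕ+) : (descParts lam).length = Multiset.card lam := by
  rw [← Multiset.coe_card, coe_descParts, Multiset.card_map]

theorem pos_of_mem_descParts {lam : Multiset ℕ+} {a : ℕ} (ha : a ∈ descParts lam) : 0 < a := by
  rw [← Multiset.mem_coe, coe_descParts, Multiset.mem_map] at ha
  obtain ⟨b, -, rfl⟩ := ha
  exact b.pos

theorem row_eq_zero_iff {lam : Multiset ℕ+} {i : ℕ} : row lam i = 0 ↔ Multiset.card lam ≤ i := by
  rw [← length_descParts, row]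
  refine ⟨fun h => ?_, List.getD_eq_default _ _⟩
  by_contra! hi
  rw [List.getD_eq_getElem _ _ hi] at h
  exact (pos_of_mem_descParts (List.getElem_mem hi)).ne' h

theorem antitone_row (lam : Multiset ℕ+) : Antitone (row lam) := by
  intro i j hij
  rcases hij.eq_or_lt with rfl | hij
  · rfl
  rcases le_or_gt (Multiset.card lam) j with hj | hj
  · rw [row_eq_zero_iff.2 hj]
    exact Nat.zero_le _
  · rw [← length_descParts] at hj
    rw [row, row, List.getD_eq_getElem _ _ hj, List.getD_eq_getElem _ _ (hij.trans hj)]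
    exact List.pairwise_iff_getElem.1 (pairwise_descParts lam) i j (hij.trans hj) hj hij

theorem row_injective : Function.Injective row := by
  intro lam mu h
  have hcard : Multiset.card lam = Multiset.card mu :=
    le_antisymm (row_eq_zero_iff.1 (h ▸ row_eq_zero_iff.2 le_rfl))
      (row_eq_zero_iff.1 (h ▸ row_eq_zero_iff.2 le_rfl))
  have hdesc : descParts lam = descParts mu := by
    refine List.ext_getElem (by rw [length_descParts, length_descParts, hcard]) fun i hi hi' => ?_
    have hrow := congrFun h i
    rwa [row, row, List.getD_eq_getElem _ _ hi, List.getD_eq_getElem _ _ hi'] at hrow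
  exact Multiset.map_injective PNat.coe_injective <| by rw [← coe_descParts, hdesc, coe_descParts]

theorem pSum_eq_sum_row (lam : Multiset ℕ+) (k : ℕ) :
    pSum lam k = ∑ i ∈ Finset.range k, row lam i := by
  induction k with
  | zero => rfl
  | succ k ih =>
    rw [Finset.sum_range_succ, ← ih, pSum, pSum, row]
    rcases lt_or_ge k (descParts lam).length with hk | hk
    · rw [List.sum_take_succ _ _ hk, List.getD_eq_getElem _ _ hk]
    · rw [List.take_of_length_le hk, List.take_of_length_le (by omega), List.getD_eq_default _ _ hk,
        add_zero]

theorem pSum_eq_wt {lam : Multiset ℕ+} {k : ℕ} (hk : Multiset.card lam ≤ k) :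
    pSum lam k = wt lam := by
  rw [pSum, wt, List.take_of_length_le (by rwa [length_descParts]), ← coe_descParts,
    Multiset.sum_coe]

theorem card_le_wt (lam : Multiset ℕ+) : Multiset.card lam ≤ wt lam := by
  simpa [wt] using Multiset.card_nsmul_le_sum (s := lam.map fun a : ℕ+ => (a : ℕ)) (a := 1)
    fun a ha => by
      obtain ⟨b, -, rfl⟩ := Multiset.mem_map.1 ha
      exact b.pos

theorem row_le_wt (lam : Multiset ℕ+) (i : ℕ) : row lam i ≤ wt lam := by
  rw [← pSum_eq_wt (le_max_right (i + 1) (Multiset.card lam)), pSum_eq_sum_row]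
  exact Finset.single_le_sum (fun _ _ => Nat.zero_le _) (Finset.mem_range.2 (by omega))

theorem exists_row_eq {b : ℕ → ℕ} (hb : Antitone b) {N : ℕ} (hN : b N = 0) :
    ∃ mu : Multiset ℕ+, row mu = b := by
  classical
  have hex : ∃ k, b k = 0 := ⟨N, hN⟩
  have hpos (i : Fin (Nat.find hex)) : 0 < b i := Nat.pos_of_ne_zero (Nat.find_min hex i.2)
  let L : List ℕ+ := List.ofFn fun i : Fin (Nat.find hex) => ⟨b i, hpos i⟩
  have hmap : L.map (fun a : ℕ+ => (a : ℕ)) = List.ofFn fun i : Fin (Nat.find hex) => b i :=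
    List.map_ofFn
  have hdesc : descParts (L : Multiset ℕ+) = List.ofFn fun i : Fin (Nat.find hex) => b i := by
    refine List.Perm.eq_of_pairwise' (pairwise_descParts _)
      (List.pairwise_ofFn.2 fun i j hij => hb hij.le) ?_
    rw [← Multiset.coe_eq_coe, coe_descParts, Multiset.map_coe, hmap]
  refine ⟨L, funext fun i => ?_⟩
  rw [row, hdesc]
  rcases lt_or_ge i (Nat.find hex) with hi | hi
  · rw [List.getD_eq_getElem _ _ (by simpa using hi), List.getElem_ofFn]
  · rw [List.getD_eq_default _ _ (by simpa using hi)]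
    exact (Nat.le_zero.1 ((hb hi).trans (Nat.find_spec hex).le)).symm

theorem exists_row_add_rev_eq {N : ℕ} {a : Fin N → ℕ} (ha : StrictAnti a) :
    ∃ mu : Multiset ℕ+, Multiset.card mu ≤ N ∧ ∀ i : Fin N, a i = row mu i + i.rev := by
  have hle (i : Fin N) : (i.rev : ℕ) ≤ a i := by
    have hcard := Finset.card_le_card_of_injOn (s := Finset.Ioi i) (t := Finset.range (a i)) a
      (fun j hj => Finset.mem_coe.2 (Finset.mem_range.2 (ha (Finset.mem_Ioi.1 hj))))
      ha.injective.injOn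
    rw [Fin.card_Ioi, Finset.card_range] at hcard
    rw [Fin.val_rev]
    omega
  let b (i : ℕ) : ℕ := if h : i < N then a ⟨i, h⟩ - (⟨i, h⟩ : Fin N).rev else 0
  have hb : Antitone b := by
    refine antitone_nat_of_succ_le fun i => ?_
    by_cases hi : i + 1 < N
    · have hlt : a ⟨i + 1, hi⟩ < a ⟨i, by omega⟩ := ha (Fin.mk_lt_mk.2 i.lt_succ_self)
      simp only [b, dif_pos hi, dif_pos (show i < N by omega), Fin.val_rev]
      omega
    · simp only [b, dif_neg hi, Nat.zero_le]
  have hbN : b N = 0 := dif_neg (lt_irrefl N)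
  obtain ⟨mu, hmu⟩ := exists_row_eq hb hbN
  refine ⟨mu, row_eq_zero_iff.1 (hmu ▸ hbN), fun i => ?_⟩
  rw [hmu]
  simp only [b, dif_pos i.2, Fin.eta, Nat.sub_add_cancel (hle i)]

theorem eq_of_pSum_eq {lam mu : Multiset ℕ+} (h : ∀ k, pSum mu k = pSum lam k) : mu = lam := by
  refine row_injective (funext fun i => ?_)
  have hsucc := h (i + 1)
  rwa [pSum_eq_sum_row, pSum_eq_sum_row, Finset.sum_range_succ, Finset.sum_range_succ,
    ← pSum_eq_sum_row, ← pSum_eq_sum_row, h i, add_right_inj] at hsucc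

theorem strictDom_trans {lam mu nu : Multiset ℕ+} (h₁ : StrictDom nu mu) (h₂ : StrictDom mu lam) :
    StrictDom nu lam := by
  refine ⟨?_, h₁.2.1.trans h₂.2.1, fun k => (h₁.2.2 k).trans (h₂.2.2 k)⟩
  rintro rfl
  exact h₁.1 (eq_of_pSum_eq fun k => le_antisymm (h₁.2.2 k) (h₂.2.2 k))

theorem card_le_card_of_strictDom {lam mu : Multiset ℕ+} (h : StrictDom mu lam) :
    Multiset.card lam ≤ Multiset.card mu := by
  have hge := h.2.2 (Multiset.card mu)
  have hle : pSum lam (Multiset.card mu + 1) ≤ wt lam := by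
    rw [← pSum_eq_wt (le_max_right (Multiset.card mu + 1) _), pSum_eq_sum_row, pSum_eq_sum_row]
    exact Finset.sum_le_sum_of_subset (Finset.range_mono (le_max_left _ _))
  rw [pSum_eq_sum_row, Finset.sum_range_succ, ← pSum_eq_sum_row] at hle
  rw [pSum_eq_wt le_rfl, h.2.1] at hge
  exact row_eq_zero_iff.1 (by omega)

theorem wellFounded_strictDom : WellFounded StrictDom := by
  let height (lam : Multiset ℕ+) : ℕ := ∑ k ∈ Finset.range (wt lam), pSum lam k
  refine Subrelation.wf (r := InvImage (· < ·) height) (fun {mu lam} h => ?_)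
    (InvImage.wf height wellFounded_lt)
  change height mu < height lam
  simp only [height, h.2.1]
  refine Finset.sum_lt_sum (fun k _ => h.2.2 k) ?_
  by_contra! hge
  refine h.1 (eq_of_pSum_eq fun k => ?_)
  rcases lt_or_ge k (wt lam) with hk | hk
  · exact le_antisymm (h.2.2 k) (hge k (Finset.mem_range.2 hk))
  · rw [pSum_eq_wt ((card_le_wt lam).trans hk),
      pSum_eq_wt ((card_le_wt mu).trans (h.2.1.le.trans hk)), h.2.1]

theorem exists_row_lt_row_of_strictDom {lam mu : Multiset ℕ+} (h : StrictDom mu lam) :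
    ∃ k, (∀ i < k, row mu i = row lam i) ∧ row mu k < row lam k := by
  classical
  have hex : ∃ k, row mu k ≠ row lam k := Function.ne_iff.1 (row_injective.ne h.1)
  have heq : ∀ i < Nat.find hex, row mu i = row lam i := fun i hi => not_not.1 (Nat.find_min hex hi)
  have hle := h.2.2 (Nat.find hex + 1)
  rw [pSum_eq_sum_row, pSum_eq_sum_row, Finset.sum_range_succ, Finset.sum_range_succ,
    Finset.sum_congr rfl fun i hi => heq i (Finset.mem_range.1 hi), add_le_add_iff_left] at hle
  exact ⟨_, heq, hle.lt_of_ne (Nat.find_spec hex)⟩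

theorem finite_setOf_strictDom (lam : Multiset ℕ+) : {mu | StrictDom mu lam}.Finite := by
  let rows (mu : Multiset ℕ+) (i : Fin (wt lam)) : ℕ := row mu i
  refine Set.Finite.of_injOn (f := rows) (t := Set.Iic fun _ => wt lam) ?_ ?_ (Set.finite_Iic _)
  · intro mu h i
    exact (row_le_wt mu i).trans h.2.1.le
  · intro mu hmu nu hnu h
    refine row_injective (funext fun i => ?_)
    rcases lt_or_ge i (wt lam) with hi | hi
    · exact congrFun h ⟨i, hi⟩
    · rw [row_eq_zero_iff.2 ((card_le_wt mu).trans (hmu.2.1.le.trans hi)),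
        row_eq_zero_iff.2 ((card_le_wt nu).trans (hnu.2.1.le.trans hi))]

theorem lt_card_of_strictDom {lam mu : Multiset ℕ+} {l r : ℕ} (hlam : Multiset.card lam ≤ l)
    (hr : ∀ i < l, row lam i = r) (h : StrictDom mu lam) : l < Multiset.card mu := by
  by_contra! hmu
  obtain ⟨k, heq, hlt⟩ := exists_row_lt_row_of_strictDom h
  have hk : k < l := by
    by_contra! hk
    rw [row_eq_zero_iff.2 (hlam.trans hk)] at hlt
    exact Nat.not_lt_zero _ hlt
  have hsum : pSum mu l < pSum lam l := by
    rw [pSum_eq_sum_row, pSum_eq_sum_row]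
    refine Finset.sum_lt_sum (fun i hi => ?_) ⟨k, Finset.mem_range.2 hk, hlt⟩
    rcases lt_or_ge i k with hik | hik
    · exact (heq i hik).le
    · rw [hr i (Finset.mem_range.1 hi), ← hr k hk]
      exact (antitone_row mu hik).trans hlt.le
  rw [pSum_eq_wt hmu, pSum_eq_wt hlam, h.2.1] at hsum
  exact hsum.false

end Rows

/-! ### Triangularity of the Macdonald operator on Schur functions -/

section Triangularity

variable {N : ℕ}

/-- The sum of the first `k` entries of `a`. -/
def headSum (a : Fin N → ℕ) (k : ℕ) : ℕ := ∑ i : Fin N, if (i : ℕ) < k then a i else 0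

theorem headSum_add (a b : Fin N → ℕ) (k : ℕ) :
    headSum (fun i => a i + b i) k = headSum a k + headSum b k := by
  rw [headSum, headSum, headSum, ← Finset.sum_add_distrib]
  exact Finset.sum_congr rfl fun i _ => by split_ifs <;> rfl

theorem headSum_succ (a : Fin N → ℕ) (j : Fin N) : headSum a (j + 1) = headSum a j + a j := by
  rw [headSum, headSum, ← Finset.sum_erase_add _ _ (Finset.mem_univ j),
    ← Finset.sum_erase_add (a := j) _ (fun i : Fin N => ite _ _ _) (Finset.mem_univ j),
    if_pos (Nat.lt_succ_self _), if_neg (lt_irrefl _), add_zero, add_left_inj]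
  refine Finset.sum_congr rfl fun i hi => ?_
  have : (i : ℕ) ≠ j := fun h => Finset.ne_of_mem_erase hi (Fin.ext h)
  simp only [show (i : ℕ) < j + 1 ↔ (i : ℕ) < j by omega]

theorem headSum_injective : Function.Injective (headSum (N := N)) := by
  intro a b h
  funext j
  have hsucc := congrFun h (j + 1)
  rwa [headSum_succ, headSum_succ, h, add_right_inj] at hsucc

theorem headSum_comp_perm_le {a : Fin N → ℕ} (ha : Antitone a) (σ : Equiv.Perm (Fin N)) (k : ℕ) :
    headSum (fun i => a (σ i)) k ≤ headSum a k := by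
  have hanti : Antitone fun i : Fin N => if (i : ℕ) < k then 1 else 0 := fun i j hij => by
    have : (i : ℕ) ≤ j := hij
    dsimp only
    split_ifs <;> omega
  simpa [headSum] using (hanti.monovary ha).sum_mul_comp_perm_le_sum_mul (σ := σ)

theorem headSum_row {lam : Multiset ℕ+} (h : Multiset.card lam ≤ N) (k : ℕ) :
    headSum (fun i : Fin N => row lam i) k = pSum lam k := by
  rw [pSum_eq_sum_row, headSum, ← Finset.sum_range fun i => if i < k then row lam i else 0,
    ← Finset.sum_filter]
  refine Finset.sum_subset (fun i hi => ?_) fun i hi hi' => ?_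
  · exact Finset.mem_range.2 (Finset.mem_filter.1 hi).2
  · simp only [Finset.mem_filter, Finset.mem_range] at hi hi'
    exact row_eq_zero_iff.2 (by omega)

theorem wt_eq_sum_row {lam : Multiset ℕ+} (h : Multiset.card lam ≤ N) :
    wt lam = ∑ i : Fin N, row lam i := by
  rw [← pSum_eq_wt h, pSum_eq_sum_row, Finset.sum_range]

theorem strictDom_of_row_comp_perm {lam mu : Multiset ℕ+} (hlam : Multiset.card lam ≤ N)
    (hmu : Multiset.card mu ≤ N) {σ ρ : Equiv.Perm (Fin N)}
    (h : ∀ i, row lam (ρ (σ i)) + (σ i).rev = row mu i + i.rev)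
    (hρ : ¬ ∀ i : Fin N, row lam (ρ i) = row lam i) : StrictDom mu lam := by
  have hsum (k : ℕ) : headSum (fun i => row lam (ρ (σ i))) k + headSum (fun i => (σ i).rev) k =
      pSum mu k + headSum (fun i : Fin N => i.rev) k := by
    rw [← headSum_row hmu, ← headSum_add, ← headSum_add, funext h]
  have hrow (k : ℕ) : headSum (fun i => row lam (ρ (σ i))) k ≤ pSum lam k := by
    rw [← headSum_row hlam]
    exact headSum_comp_perm_le (fun i j hij => antitone_row lam hij) (σ.trans ρ) k
  have hrev := headSum_comp_perm_le (a := fun i : Fin N => i.rev)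
    (fun i j hij => Fin.rev_le_rev.2 hij) σ
  refine ⟨?_, ?_, fun k => ?_⟩
  · rintro rfl
    have hrev_eq : (fun i => ((σ i).rev : ℕ)) = fun i : Fin N => (i.rev : ℕ) :=
      headSum_injective <| funext fun k => by linarith [hsum k, hrow k, hrev k]
    refine hρ fun i => ?_
    have hσ : σ i = i := Fin.rev_injective (Fin.ext (congrFun hrev_eq i))
    simpa only [hσ, add_left_inj] using h i
  · have htotal := Finset.sum_congr (rfl : (Finset.univ : Finset (Fin N)) = _) fun i _ => h i
    rw [Finset.sum_add_distrib, Finset.sum_add_distrib, ← wt_eq_sum_row hmu,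
      Equiv.sum_comp σ fun i => (i.rev : ℕ), Equiv.sum_comp σ fun i => row lam (ρ i),
      Equiv.sum_comp ρ fun i : Fin N => row lam i, ← wt_eq_sum_row hlam, add_left_inj] at htotal
    exact htotal.symm
  · linarith [hsum k, hrow k, hrev k]

theorem exists_perm_row_add_rev_eq {a : Fin N → ℕ} (ha : Function.Injective a) :
    ∃ (σ : Equiv.Perm (Fin N)) (mu : Multiset ℕ+), Multiset.card mu ≤ N ∧
      ∀ i, a (σ i) = row mu i + i.rev := by
  let σ : Equiv.Perm (Fin N) := Tuple.sort (OrderDual.toDual ∘ a)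
  have hanti : Antitone (a ∘ σ) := fun i j hij => Tuple.monotone_sort (OrderDual.toDual ∘ a) hij
  exact ⟨σ, exists_row_add_rev_eq (hanti.strictAnti_of_injective (ha.comp σ.injective))⟩

variable {R : Type} [Field R]

theorem jacobiTrudi_row_add_rev {lam : Multiset ℕ+} (h : Multiset.card lam ≤ N) :
    jacobiTrudi R X (fun i : Fin N => row lam i + i.rev) = schur (R := R) lam := by
  induction N, h using Nat.le_induction with
  | base =>
    rw [jacobiTrudi, schur]
    congr 2
    ext1 i
    ext1 j
    rw [hAt_X, row, Fin.val_rev, Fin.val_rev]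
    congr 1
    omega
  | succ N h ih =>
    rw [← ih, jacobiTrudi, Matrix.det_succ_row _ (Fin.last N), Finset.sum_eq_single (Fin.last N)]
    · have hlast : hAt R (X : ℕ+ → SymFn R) ((row lam (Fin.last N) + (Fin.last N).rev : ℕ) -
          ((Fin.last N).rev : ℕ) : ℤ) = 1 := by simp [row_eq_zero_iff.2 h, hAt_zero]
      rw [Matrix.of_apply, hlast, jacobiTrudi, mul_one, Even.neg_one_pow ⟨_, rfl⟩, one_mul]
      congr 1
      ext1 i j
      simp only [Matrix.submatrix_apply, Matrix.of_apply, Fin.succAbove_last, Fin.rev_castSucc,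
        Fin.val_castSucc, Fin.val_succ]
      congr 1
      omega
    · intro j _ hj
      rw [Matrix.of_apply, hAt_of_neg, mul_zero, zero_mul]
      have hjN : (j : ℕ) < N := Fin.val_lt_last hj
      rw [row_eq_zero_iff.2 (by simpa using h), Fin.val_rev, Fin.val_rev, Fin.val_last]
      omega
    · simp

theorem jacobiTrudi_eq_sign_mul_schur {a : Fin N → ℕ} {σ : Equiv.Perm (Fin N)}
    {mu : Multiset ℕ+} (hmu : Multiset.card mu ≤ N) (h : ∀ i, a (σ i) = row mu i + i.rev) :
    jacobiTrudi R X a = (Equiv.Perm.sign σ : ℤ) • schur (R := R) mu := by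
  have hcomp : a ∘ σ = fun i : Fin N => row mu i + i.rev := funext h
  rw [← jacobiTrudi_row_add_rev hmu, ← hcomp, jacobiTrudi_comp_perm, zsmul_eq_mul, ← mul_assoc,
    ← Int.cast_mul, ← Units.val_mul, Int.units_mul_self, Units.val_one, Int.cast_one, one_mul]

variable (R) in
/-- The span of the Schur functions indexed by the partitions in `T`. -/
def schurSpan (T : Set (Multiset ℕ+)) : Submodule R (SymFn R) :=
  Submodule.span R (schur '' T)

theorem schur_mem_schurSpan {T : Set (Multiset ℕ+)} {mu : Multiset ℕ+} (h : mu ∈ T) :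
    schur mu ∈ schurSpan R T :=
  Submodule.subset_span ⟨mu, h, rfl⟩

theorem schurSpan_le {T : Set (Multiset ℕ+)} {S : Submodule R (SymFn R)} :
    schurSpan R T ≤ S ↔ ∀ mu ∈ T, schur mu ∈ S := by
  rw [schurSpan, Submodule.span_le, Set.image_subset_iff]
  rfl

theorem jacobiTrudi_row_comp_perm_mem {lam : Multiset ℕ+} (h : Multiset.card lam ≤ N)
    {ρ : Equiv.Perm (Fin N)} (hρ : ¬ ∀ i : Fin N, row lam (ρ i) = row lam i) :
    jacobiTrudi R X (fun i => row lam (ρ i) + i.rev) ∈ schurSpan R {mu | StrictDom mu lam} := by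
  by_cases ha : Function.Injective fun i => row lam (ρ i) + i.rev
  · obtain ⟨σ, mu, hmu, hσ⟩ := exists_perm_row_add_rev_eq ha
    rw [jacobiTrudi_eq_sign_mul_schur hmu hσ]
    exact zsmul_mem (schur_mem_schurSpan (strictDom_of_row_comp_perm h hmu hσ hρ)) _
  · rw [jacobiTrudi_eq_zero_of_not_injective R X ha]
    exact zero_mem _

theorem sum_smul_jacobiTrudi_row_comp_perm_sub_mem {lam : Multiset ℕ+}
    (h : Multiset.card lam ≤ N) (w : Equiv.Perm (Fin N) → R) :
    ∑ ρ : Equiv.Perm (Fin N), w ρ • jacobiTrudi R X (fun i => row lam (ρ i) + i.rev) -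
      (∑ ρ : Equiv.Perm (Fin N) with ∀ i : Fin N, row lam (ρ i) = row lam i, w ρ) • schur lam ∈
        schurSpan R {mu | StrictDom mu lam} := by
  rw [← Finset.sum_filter_add_sum_filter_not _ fun ρ : Equiv.Perm (Fin N) =>
      ∀ i : Fin N, row lam (ρ i) = row lam i, Finset.sum_smul, Finset.sum_congr rfl
      (g := fun ρ => w ρ • schur lam), add_sub_cancel_left]
  · exact sum_mem fun ρ hρ => Submodule.smul_mem _ _ <|
      jacobiTrudi_row_comp_perm_mem h (Finset.mem_filter.1 hρ).2
  · intro ρ hρ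
    simp only [(Finset.mem_filter.1 hρ).2, jacobiTrudi_row_add_rev h]

/-- The eigenvalue `1 + ∑ᵢ (sⁱ - sⁱ⁺¹) (q ^ λᵢ₊₁ - 1)` of the Macdonald operator on `P_λ`, where `s`
stands for `t⁻¹`. -/
def macdonaldEigenvalue {B : Type*} [CommRing B] (q s : B) (lam : Multiset ℕ+) : B :=
  eigenvalue q s fun i : Fin (Multiset.card lam) => row lam i

theorem map_macdonaldEigenvalue {B B' : Type*} [CommRing B] [CommRing B'] (f : B →+* B') (q s : B)
    (lam : Multiset ℕ+) : f (macdonaldEigenvalue q s lam) = macdonaldEigenvalue (f q) (f s) lam :=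
  map_eigenvalue f q s _

theorem eigenvalue_row {B : Type*} [CommRing B] (q s : B) {lam : Multiset ℕ+}
    (h : Multiset.card lam ≤ N) :
    eigenvalue q s (fun i : Fin N => row lam i) = macdonaldEigenvalue q s lam := by
  simp only [macdonaldEigenvalue, eigenvalue]
  rw [← Finset.sum_range fun i => (s ^ i - s ^ (i + 1)) * (q ^ row lam i - 1),
    ← Finset.sum_range fun i => (s ^ i - s ^ (i + 1)) * (q ^ row lam i - 1), add_right_inj]
  refine (Finset.sum_subset (Finset.range_mono h) fun i _ hi => ?_).symm
  rw [row_eq_zero_iff.2 (by simpa using hi), pow_zero, sub_self, mul_zero]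

variable (R) in
/-- The sum of the permutations of the monomial `x^λ` in `N` variables, a nonzero multiple of the
monomial symmetric polynomial. -/
def monomialOrbitSum (N : ℕ) (lam : Multiset ℕ+) : MvPolynomial (Fin N) R :=
  ∑ ρ : Equiv.Perm (Fin N), monomial (Finsupp.equivFunOnFinite.symm fun i => row lam (ρ i)) 1

theorem isSymmetric_monomialOrbitSum (lam : Multiset ℕ+) :
    (monomialOrbitSum R N lam).IsSymmetric := by
  intro τ
  rw [monomialOrbitSum, map_sum, ← Equiv.sum_comp (Equiv.mulRight τ)]
  refine Finset.sum_congr rfl fun ρ _ => ?_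
  rw [rename_monomial]
  congr 2
  ext i
  simp [Finsupp.mapDomain_equiv_apply]

theorem isHomogeneous_monomialOrbitSum {lam : Multiset ℕ+} (h : Multiset.card lam ≤ N) :
    (monomialOrbitSum R N lam).IsHomogeneous (wt lam) := by
  refine IsHomogeneous.sum _ _ _ fun ρ _ => isHomogeneous_monomial _ ?_
  rw [Finsupp.degree_eq_sum, wt_eq_sum_row h]
  exact Equiv.sum_comp ρ fun i : Fin N => row lam i

theorem straighten_monomialOrbitSum (lam : Multiset ℕ+) :
    straighten R N (monomialOrbitSum R N lam) =
      ∑ ρ : Equiv.Perm (Fin N), (1 : R) • jacobiTrudi R X fun i => row lam (ρ i) + i.rev := by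
  simp only [monomialOrbitSum, map_sum, straighten_monomial,
    Finsupp.equivFunOnFinite_symm_apply_apply]

theorem map_mem_schurSpan {E : SymFn R →ₗ[R] SymFn R} {e : Multiset ℕ+ → R}
    {T : Set (Multiset ℕ+)} (hT : ∀ mu ∈ T, {nu | StrictDom nu mu} ⊆ T)
    (hE : ∀ mu ∈ T, E (schur mu) - e mu • schur mu ∈ schurSpan R {nu | StrictDom nu mu})
    {f : SymFn R} (hf : f ∈ schurSpan R T) : E f ∈ schurSpan R T := by
  refine (schurSpan_le (S := (schurSpan R T).comap E)).2 (fun mu hmu => ?_) hf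
  rw [Submodule.mem_comap, ← sub_add_cancel (E (schur mu)) (e mu • schur mu)]
  exact add_mem (Submodule.span_mono (Set.image_mono (hT mu hmu)) (hE mu hmu))
    (Submodule.smul_mem _ _ (schur_mem_schurSpan hmu))

variable [CharZero R] (q t : R)

theorem span_range_schur : schurSpan R Set.univ = ⊤ := by
  refine eq_top_iff.2 fun f _ => ?_
  rw [f.as_sum]
  refine sum_mem fun d _ => ?_
  rw [← straighten_restrict le_rfl (isWeightedHomogeneous_monomial _ d (coeff d f) rfl),
    (restrict R _ _).as_sum, map_sum]
  refine sum_mem fun α _ => ?_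
  rw [straighten_monomial]
  refine Submodule.smul_mem _ _ ?_
  by_cases ha : Function.Injective fun i => α i + i.rev
  · obtain ⟨σ, mu, hmu, hσ⟩ := exists_perm_row_add_rev_eq ha
    rw [jacobiTrudi_eq_sign_mul_schur hmu hσ]
    exact zsmul_mem (schur_mem_schurSpan (Set.mem_univ mu)) _
  · rw [jacobiTrudi_eq_zero_of_not_injective R X ha]
    exact zero_mem _

theorem macdonaldOp_straighten_monomialOrbitSum {lam : Multiset ℕ+} (h : wt lam ≤ N) :
    macdonaldOp q t (straighten R N (monomialOrbitSum R N lam)) =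
      ∑ ρ : Equiv.Perm (Fin N), eigenvalue q t⁻¹ (fun i => row lam (ρ i)) •
        jacobiTrudi R X fun i => row lam (ρ i) + i.rev := by
  have hrestrict : restrict R N (straighten R N (monomialOrbitSum R N lam)) =
      monomialOrbitSum R N lam := by
    simpa [straighten_one] using
      restrict_straighten_mul 1 (isSymmetric_monomialOrbitSum (R := R) (N := N) lam)
  rw [macdonaldOp_eq_straighten h q t (hasDegree_straighten
    (isHomogeneous_monomialOrbitSum ((card_le_wt lam).trans h))), hrestrict, monomialOrbitSum]
  simp only [map_sum, diagonalOp_monomial, map_smul, straighten_monomial, one_smul]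
  rfl

theorem macdonaldOp_schur_sub_mem (lam : Multiset ℕ+) :
    macdonaldOp q t (schur lam) - macdonaldEigenvalue q t⁻¹ lam • schur lam ∈
      schurSpan R {mu | StrictDom mu lam} := by
  induction lam using wellFounded_strictDom.induction with
  | _ lam ih =>
    have hcard := card_le_wt lam
    let fixers : Finset (Equiv.Perm (Fin (wt lam))) :=
      {ρ | ∀ i : Fin (wt lam), row lam (ρ i) = row lam i}
    have hfix : (fixers.card : R) ≠ 0 :=
      Nat.cast_ne_zero.2 (Finset.card_ne_zero_of_mem (a := 1) (by simp [fixers]))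
    have hmem := sum_smul_jacobiTrudi_row_comp_perm_sub_mem hcard fun _ => (1 : R)
    rw [← straighten_monomialOrbitSum, Finset.sum_const, nsmul_one] at hmem
    have hEmem := sum_smul_jacobiTrudi_row_comp_perm_sub_mem hcard fun ρ =>
      eigenvalue q t⁻¹ (fun i => row lam (ρ i))
    rw [← macdonaldOp_straighten_monomialOrbitSum q t le_rfl, Finset.sum_congr rfl
      (g := fun _ => macdonaldEigenvalue q t⁻¹ lam) fun ρ hρ => by
        simp only [(Finset.mem_filter.1 hρ).2, eigenvalue_row q t⁻¹ hcard],
      Finset.sum_const, ← Nat.cast_smul_eq_nsmul R] at hEmem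
    refine (Submodule.smul_mem_iff _ hfix).1 ?_
    convert sub_mem hEmem (map_mem_schurSpan (fun mu hmu nu hnu => strictDom_trans hnu hmu) ih hmem)
      using 1
    rw [map_sub, map_smul]
    module

theorem macdonaldOp_mem_schurSpan {T : Set (Multiset ℕ+)}
    (hT : ∀ mu ∈ T, {nu | StrictDom nu mu} ⊆ T) {f : SymFn R} (hf : f ∈ schurSpan R T) :
    macdonaldOp q t f ∈ schurSpan R T :=
  map_mem_schurSpan hT (fun mu _ => macdonaldOp_schur_sub_mem q t mu) hf

end Triangularity

section Eigenvectors

variable {R : Type} [Field R] {q t : R} {P : Multiset ℕ+ → SymFn R}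

theorem schurSpan_strictDom_le (hP : IsMacdonaldBasis q t P) (lam : Multiset ℕ+) :
    schurSpan R {mu | StrictDom mu lam} ≤ Submodule.span R (P '' {mu | StrictDom mu lam}) := by
  induction lam using wellFounded_strictDom.induction with
  | _ lam ih =>
    refine schurSpan_le.2 fun mu hmu => ?_
    rw [← sub_sub_cancel (P mu) (schur mu)]
    exact sub_mem (Submodule.subset_span ⟨mu, hmu, rfl⟩) <|
      Submodule.span_mono (Set.image_mono fun nu hnu => strictDom_trans hnu hmu)
        (ih mu hmu (hP.1 mu))

theorem innerForm_eq_zero_of_mem_span (hP : IsMacdonaldBasis q t P) {lam : Multiset ℕ+}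
    {T : Set (Multiset ℕ+)} (hlam : lam ∉ T) {f : SymFn R} (hf : f ∈ Submodule.span R (P '' T)) :
    innerForm q t (P lam) f = 0 := by
  have hle : Submodule.span R (P '' T) ≤ LinearMap.ker (innerForm q t (P lam)) := by
    refine Submodule.span_le.2 ?_
    rintro _ ⟨mu, hmu, rfl⟩
    exact (innerForm_apply q t _ _).trans (hP.2 lam mu fun h => hlam (h ▸ hmu))
  exact hle hf

variable [CharZero R]

theorem span_range_macdonald (hP : IsMacdonaldBasis q t P) :
    Submodule.span R (Set.range P) = ⊤ := by
  rw [eq_top_iff, ← span_range_schur]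
  refine schurSpan_le.2 fun mu _ => ?_
  rw [← sub_sub_cancel (P mu) (schur mu)]
  exact sub_mem (Submodule.subset_span ⟨mu, rfl⟩) <|
    Submodule.span_mono (Set.image_subset_range _ _) (schurSpan_strictDom_le hP mu (hP.1 mu))

theorem macdonaldOp_macdonald_sub_mem (hP : IsMacdonaldBasis q t P) (lam : Multiset ℕ+) :
    macdonaldOp q t (P lam) - macdonaldEigenvalue q t⁻¹ lam • P lam ∈
      schurSpan R {mu | StrictDom mu lam} := by
  have hmem := add_mem (macdonaldOp_schur_sub_mem q t lam) <|
    sub_mem (macdonaldOp_mem_schurSpan q t (fun mu hmu nu hnu => strictDom_trans hnu hmu)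
      (hP.1 lam)) (Submodule.smul_mem _ (macdonaldEigenvalue q t⁻¹ lam) (hP.1 lam))
  convert hmem using 1
  rw [map_sub]
  module

theorem macdonaldOp_macdonald (ht0 : t ≠ 0) (hq : ∀ k : ℕ+, q ^ (k : ℕ) ≠ 1)
    (ht : ∀ k : ℕ+, t ^ (k : ℕ) ≠ 1) (hP : IsMacdonaldBasis q t P) (lam : Multiset ℕ+) :
    macdonaldOp q t (P lam) = macdonaldEigenvalue q t⁻¹ lam • P lam := by
  set g := macdonaldOp q t (P lam) - macdonaldEigenvalue q t⁻¹ lam • P lam with hg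
  have hbelow (mu : Multiset ℕ+) : macdonaldOp q t (P mu) - macdonaldEigenvalue q t⁻¹ mu • P mu ∈
      Submodule.span R (P '' {nu | StrictDom nu mu}) :=
    schurSpan_strictDom_le hP mu (macdonaldOp_macdonald_sub_mem hP mu)
  have horth (mu : Multiset ℕ+) : innerForm q t (P mu) g = 0 := by
    by_cases hmu : StrictDom mu lam
    · have hEmu : macdonaldOp q t (P mu) ∈ Submodule.span R (P '' {nu | StrictDom nu lam}) := by
        rw [← sub_add_cancel (macdonaldOp q t (P mu)) (macdonaldEigenvalue q t⁻¹ mu • P mu)]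
        exact add_mem (Submodule.span_mono (Set.image_mono fun nu hnu => strictDom_trans hnu hmu)
          (hbelow mu)) (Submodule.smul_mem _ _ (Submodule.subset_span ⟨mu, hmu, rfl⟩))
      rw [hg, map_sub, map_smul, ← innerForm_macdonaldOp_left q ht0 ht, innerForm_comm,
        innerForm_eq_zero_of_mem_span hP (fun h => h.1 rfl) hEmu, innerForm_apply,
        hP.2 mu lam hmu.1, smul_zero, sub_zero]
    · exact innerForm_eq_zero_of_mem_span hP hmu (hbelow lam)
  have hker : Submodule.span R (Set.range P) ≤ LinearMap.ker ((innerForm q t).flip g) :=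
    Submodule.span_le.2 (by rintro _ ⟨mu, rfl⟩; exact horth mu)
  rw [span_range_macdonald hP] at hker
  exact sub_eq_zero.1 <| eq_zero_of_innerForm_eq_zero hq ht fun f => hker trivial

end Eigenvectors

/-! ### Specialization at a place -/

section BaseChange

variable {K F B : Type} [Field K] [CharZero K] [Field F] [CharZero F] [CommRing B]
  [Algebra K B] [Algebra F B]

variable (K F) in
theorem hAt_eq_hAt (c : ℕ+ → B) (z : ℤ) : hAt F c z = hAt K c z := by
  induction hn : z.toNat using Nat.strong_induction_on generalizing z with
  | _ n ih =>
    rcases lt_trichotomy z 0 with hz | rfl | hz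
    · rw [hAt_of_neg F c hz, hAt_of_neg K c hz]
    · rw [hAt_zero, hAt_zero]
    · obtain ⟨m, rfl⟩ := Int.eq_succ_of_zero_lt hz
      have hm : IsUnit ((m : B) + 1) := by
        simpa using (IsUnit.mk0 ((m : K) + 1) m.cast_add_one_ne_zero).map (algebraMap K B)
      refine hm.mul_left_cancel ?_
      have hcast : ((m : ℤ) + 1) = (m + 1 : ℕ) := (Nat.cast_succ m).symm
      rw [hcast, succ_mul_hAt_succ, succ_mul_hAt_succ]
      exact Finset.sum_congr rfl fun i _ => by rw [ih _ (by omega) _ rfl]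

end BaseChange

section Place

variable {K A F : Type} [Field K] [CommRing A] [Field F] [Algebra K A] [Algebra A F]
  [Algebra K F] [IsScalarTower K A F]

variable (K A F) in
/-- Base change of symmetric functions from the coefficient ring `A` to `F`. -/
def baseChange : SymFn A →ₐ[K] SymFn F :=
  mapAlgHom (IsScalarTower.toAlgHom K A F)

theorem baseChange_X (k : ℕ+) : baseChange K A F (X k) = X k :=
  map_X _ k

theorem baseChange_C (a : A) : baseChange K A F (C a) = C (algebraMap A F a) :=
  map_C _ a

theorem baseChange_smul (a : A) (f : SymFn A) :
    baseChange K A F (a • f) = algebraMap A F a • baseChange K A F f := by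
  rw [smul_eq_C_mul, smul_eq_C_mul, map_mul, baseChange_C]

theorem aeval_baseChange (c : ℕ+ → A) (f : SymFn A) :
    aeval (fun k => algebraMap A F (c k)) (baseChange K A F f) = algebraMap A F (aeval c f) := by
  induction f using MvPolynomial.induction_on with
  | C a => simp [baseChange_C]
  | add f g hf hg => rw [map_add, map_add, map_add, map_add, hf, hg]
  | mul_X f k hf => rw [map_mul, map_mul, map_mul, map_mul, hf, baseChange_X, aeval_X, aeval_X]

theorem shift_baseChange (q : A) (f : SymFn A) :
    shift (algebraMap A F q) (baseChange K A F f) =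
      (shift q f).map (baseChange K A F : SymFn A →+* SymFn F) := by
  induction f using MvPolynomial.induction_on with
  | C a => simp [shift, baseChange_C, Polynomial.algebraMap_apply]
  | add f g hf hg => rw [map_add, map_add, map_add, hf, hg, Polynomial.map_add]
  | mul_X f k hf =>
    rw [map_mul, map_mul, map_mul, hf, Polynomial.map_mul, baseChange_X]
    simp [shift, baseChange_X, baseChange_C]

variable [CharZero K]

theorem schur_mem_range_baseChange (lam : Multiset ℕ+) :
    schur lam ∈ Set.range (baseChange K A F) := by
  have : CharZero F := charZero_of_injective_algebraMap (algebraMap K F).injective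
  refine ⟨jacobiTrudi K X fun i : Fin (Multiset.card lam) => row lam i + i.rev, ?_⟩
  rw [map_jacobiTrudi, ← jacobiTrudi_row_add_rev le_rfl]
  simp only [jacobiTrudi, hAt_eq_hAt K F]
  simp only [funext_iff.2 baseChange_X, Function.comp_def]

/-- At `t = ζ` the factor `∑ₘ hₘ ((1 - t⁻¹) y) z⁻ᵐ` of the Macdonald operator becomes `1`. -/
theorem exists_baseChange_eq_macdonaldOp {q s : A} {t : F}
    (hs : algebraMap A F s = t⁻¹) (f : SymFn A) :
    ∃ g : SymFn A, baseChange K A F g = macdonaldOp (algebraMap A F q) t (baseChange K A F f) ∧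
      ∀ (φ : A →ₐ[K] K) (c : ℕ+ → A), (∀ k : ℕ+, φ ((1 - s ^ (k : ℕ)) * c k) = 0) →
        φ (aeval c g) = φ (aeval c f) := by
  have : CharZero F := charZero_of_injective_algebraMap (algebraMap K F).injective
  let a (k : ℕ+) : SymFn A := C (1 - s ^ (k : ℕ)) * X k
  set n := (shift q f).natDegree
  refine ⟨∑ m ∈ Finset.range (n + 1), (shift q f).coeff m * hAt K a m, ?_, fun φ c hc => ?_⟩
  · have hdeg : (shift (algebraMap A F q) (baseChange K A F f)).natDegree < n + 1 := by
      rw [shift_baseChange]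
      exact Nat.lt_succ_of_le Polynomial.natDegree_map_le
    rw [macdonaldOp_eq_sum_range _ _ hdeg, map_sum]
    refine Finset.sum_congr rfl fun m _ => ?_
    rw [map_mul, map_hAt, shift_baseChange, Polynomial.coeff_map, hScaled, hAt_eq_hAt K F]
    congr! 2
    ext1 k
    simp only [a, Function.comp_apply, map_mul, baseChange_C, baseChange_X, map_sub, map_one,
      map_pow, hs]
  · let ev : SymFn A →ₐ[K] K := φ.comp ((aeval c).restrictScalars K)
    have hzero : ev ∘ a = 0 := funext fun k => by simpa [ev, a] using hc k
    have hterm (m : ℕ) : ev (hAt K a (m + 1 : ℕ)) = 0 := by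
      rw [map_hAt, hzero, hAt_zero_alphabet, if_neg m.succ_ne_zero]
    change ev _ = ev f
    rw [map_sum, Finset.sum_range_succ',
      Finset.sum_eq_zero fun m _ => by rw [map_mul, hterm, mul_zero]]
    rw [coeff_shift_zero, Nat.cast_zero, hAt_zero, mul_one, zero_add]

end Place

section Vanishing

variable (R : Type) [Field R] [CharZero R] {B : Type*} [CommRing B] [IsDomain B] [Algebra R B]
  {l : ℕ}

/-- In `l` variables the coefficients of `∏ⱼ (1 - yⱼ z)` give a linear relation between the columns
of the Jacobi–Trudi matrix. -/
theorem jacobiTrudi_powerSums_eq_zero_of_lt {N : ℕ} (hN : l < N) (y : Fin l → B) {a : Fin N → ℕ}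
    (ha : ∀ i, a i ≠ 0) : jacobiTrudi R (powerSums y) a = 0 := by
  let F : PowerSeries B := ∏ j, (1 - PowerSeries.C (y j) * PowerSeries.X)
  have hF : hSeries R (powerSums y) * F = 1 := by
    rw [hSeries_powerSums, ← Finset.prod_mul_distrib]
    exact Finset.prod_eq_one fun j _ => rescale_mk_one_mul (y j)
  refine Matrix.exists_mulVec_eq_zero_iff.1 ⟨fun j => PowerSeries.coeff j.rev F, ?_, ?_⟩
  · intro h
    have h0 := congrFun h (Fin.rev ⟨0, by omega⟩)
    simp [F] at h0
  · ext i
    have hrow := coeff_hSeries_mul R (powerSums y) (F := F) (n := a i) (M := N) fun j hj _ =>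
      coeff_prod_one_sub_C_mul_X_of_card_lt _ y (by simpa using hN.trans_le hj)
    rw [hF, PowerSeries.coeff_one, if_neg (ha i), ← Fin.sum_univ_eq_sum_range fun j =>
      hAt R (powerSums y) (a i - j) * PowerSeries.coeff j F] at hrow
    rw [Pi.zero_apply, hrow, ← Equiv.sum_comp Fin.revPerm]
    simp [Matrix.mulVec, dotProduct]

variable {R}

theorem aeval_powerSums_schur_eq_zero {mu : Multiset ℕ+} (h : l < Multiset.card mu)
    (y : Fin l → B) : aeval (powerSums y) (schur mu : SymFn R) = 0 := by
  rw [← jacobiTrudi_row_add_rev le_rfl, map_jacobiTrudi]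
  simp only [Function.comp_def, aeval_X]
  refine jacobiTrudi_powerSums_eq_zero_of_lt R h y fun i => ?_
  have hi := i.isLt
  have := mt row_eq_zero_iff.1 hi.not_ge
  omega

theorem aeval_powerSums_eq_zero_of_mem {f : SymFn R}
    (hf : f ∈ schurSpan R {mu | l < Multiset.card mu}) (y : Fin l → B) :
    aeval (powerSums y) f = 0 :=
  (schurSpan_le (S := LinearMap.ker (aeval (powerSums y)).toLinearMap)).2
    (fun _ hmu => aeval_powerSums_schur_eq_zero hmu y) hf

theorem macdonaldOp_mem_schurSpan_lt_card (q t : R) {f : SymFn R}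
    (hf : f ∈ schurSpan R {mu | l < Multiset.card mu}) :
    macdonaldOp q t f ∈ schurSpan R {mu | l < Multiset.card mu} :=
  macdonaldOp_mem_schurSpan q t
    (fun _ hmu _ hnu => lt_of_lt_of_le hmu (card_le_card_of_strictDom hnu)) hf

end Vanishing

section Projector

section Module

variable {R V : Type*} [CommRing R] [AddCommGroup V] [Module R V]

theorem aeval_apply_of_apply_eq_smul {E : Module.End R V} {e : R} {v : V} (h : E v = e • v)
    (p : Polynomial R) : Polynomial.aeval E p v = p.eval e • v := by
  rcases eq_or_ne v 0 with rfl | hv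
  · rw [map_zero, smul_zero]
  · exact Module.End.aeval_apply_of_hasEigenvector ⟨Module.End.mem_eigenspace_iff.2 h, hv⟩

theorem aeval_prod_X_sub_C_mem {ι : Type*} {E : Module.End R V} {e : ι → R} {M : Set V}
    (S : Finset ι) (hM : ∀ i ∈ S, ∀ v ∈ M, E v - e i • v ∈ M) {v : V} (hv : v ∈ M) :
    Polynomial.aeval E (∏ i ∈ S, (Polynomial.X - Polynomial.C (e i))) v ∈ M := by
  classical
  induction S using Finset.induction_on with
  | empty => simpa using hv
  | insert i S hi ih =>
    rw [Finset.prod_insert hi, map_mul, Module.End.mul_apply]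
    simpa [Module.algebraMap_end_apply] using hM i (Finset.mem_insert_self i S) _
      (ih fun j hj => hM j (Finset.mem_insert_of_mem hj))

end Module

variable {R : Type} [Field R] [CharZero R] {q t : R} {l : ℕ}

/-- The operator `∏_{μ ∈ S} (E - ε_μ)`, where `E` is the Macdonald operator and `ε_μ` its diagonal
coefficients in the Schur basis. -/
def projector (q t : R) (S : Finset (Multiset ℕ+)) : SymFn R →ₗ[R] SymFn R :=
  Polynomial.aeval (R := R) (A := Module.End R (SymFn R)) (macdonaldOp q t)
    (∏ mu ∈ S, (Polynomial.X - Polynomial.C (macdonaldEigenvalue q t⁻¹ mu)))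

theorem projector_schur_mem {S : Finset (Multiset ℕ+)} {mu : Multiset ℕ+}
    (hmu : Multiset.card mu ≤ l → mu ∈ S)
    (hS : ∀ nu, StrictDom nu mu → Multiset.card nu ≤ l → nu ∈ S) :
    projector q t S (schur mu) ∈ schurSpan R {mu | l < Multiset.card mu} := by
  classical
  induction mu using wellFounded_strictDom.induction generalizing S with
  | _ mu ih =>
    rcases lt_or_ge l (Multiset.card mu) with hl | hl
    · let long : Submodule R (SymFn R) := schurSpan R {mu | l < Multiset.card mu}
      have hclosed : ∀ nu ∈ S, ∀ f ∈ (long : Set (SymFn R)),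
          macdonaldOp q t f - macdonaldEigenvalue q t⁻¹ nu • f ∈ (long : Set (SymFn R)) :=
        fun nu _ f hf =>
          sub_mem (macdonaldOp_mem_schurSpan_lt_card q t hf) (Submodule.smul_mem _ _ hf)
      exact aeval_prod_X_sub_C_mem S hclosed (schur_mem_schurSpan hl)
    · rw [projector, ← Finset.prod_erase_mul _ _ (hmu hl), map_mul, Module.End.mul_apply]
      have hle : schurSpan R {nu | StrictDom nu mu} ≤
          (schurSpan R {nu | l < Multiset.card nu}).comap (projector q t (S.erase mu)) :=
        schurSpan_le.2 fun nu hnu => ih nu hnu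
          (fun h => Finset.mem_erase.2 ⟨hnu.1, hS nu hnu h⟩)
          (fun nu' hnu' h => Finset.mem_erase.2
            ⟨(strictDom_trans hnu' hnu).1, hS nu' (strictDom_trans hnu' hnu) h⟩)
      simpa [projector, Module.algebraMap_end_apply] using hle (macdonaldOp_schur_sub_mem q t mu)

end Projector

section RegularRepresentative

variable {K A F : Type} [Field K] [CharZero K] [CommRing A] [Field F] [Algebra K A] [Algebra A F]
  [Algebra K F] [IsScalarTower K A F] {q s : A} {t : F} {P : Multiset ℕ+ → SymFn F} {l : ℕ}
  {lam : Multiset ℕ+}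

theorem macdonaldEigenvalue_algebraMap (hs : algebraMap A F s = t⁻¹) (mu : Multiset ℕ+) :
    macdonaldEigenvalue (algebraMap A F q) t⁻¹ mu =
      algebraMap A F (macdonaldEigenvalue q s mu) := by
  rw [← hs, map_macdonaldEigenvalue]

/-- Modulo Schur functions with more than `l` parts, `P_λ` is a multiple of the projection of `s_λ`
onto its eigenline, so only the denominators `ε_λ - ε_μ` with `ℓ(μ) ≤ l` occur. -/
theorem exists_macdonald_sub_baseChange_mem (hs : algebraMap A F s = t⁻¹)
    (hP : IsMacdonaldBasis (algebraMap A F q) t P)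
    (hE : macdonaldOp (algebraMap A F q) t (P lam) =
      algebraMap A F (macdonaldEigenvalue q s lam) • P lam)
    (hlam : ∀ mu, StrictDom mu lam → Multiset.card mu ≤ l →
      IsUnit (macdonaldEigenvalue q s lam - macdonaldEigenvalue q s mu)) :
    ∃ f : SymFn A, P lam - baseChange K A F f ∈ schurSpan F {mu | l < Multiset.card mu} := by
  classical
  have : CharZero F := charZero_of_injective_algebraMap (algebraMap K F).injective
  let S := (finite_setOf_strictDom lam).toFinset.filter fun mu => Multiset.card mu ≤ l
  have hS {mu : Multiset ℕ+} : mu ∈ S ↔ StrictDom mu lam ∧ Multiset.card mu ≤ l := by simp [S]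
  have hclosed : ∀ mu ∈ S, ∀ f ∈ Set.range (baseChange K A F),
      macdonaldOp (algebraMap A F q) t f - macdonaldEigenvalue (algebraMap A F q) t⁻¹ mu • f ∈
        Set.range (baseChange K A F) := by
    rintro mu - _ ⟨f, rfl⟩
    obtain ⟨g, hg, -⟩ := exists_baseChange_eq_macdonaldOp (K := K) (q := q) hs f
    exact ⟨g - macdonaldEigenvalue q s mu • f, by
      rw [map_sub, hg, baseChange_smul, macdonaldEigenvalue_algebraMap hs]⟩
  obtain ⟨f, hf⟩ : projector (algebraMap A F q) t S (schur lam) ∈ Set.range (baseChange K A F) :=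
    aeval_prod_X_sub_C_mem S hclosed (schur_mem_range_baseChange lam)
  let c : A := ∏ mu ∈ S, (macdonaldEigenvalue q s lam - macdonaldEigenvalue q s mu)
  obtain ⟨u, hu⟩ : IsUnit c :=
    IsUnit.prod_iff.2 fun mu hmu => hlam mu (hS.1 hmu).1 (hS.1 hmu).2
  have hPlam : projector (algebraMap A F q) t S (P lam) = algebraMap A F c • P lam := by
    rw [projector, aeval_apply_of_apply_eq_smul hE]
    simp [c, Polynomial.eval_prod, macdonaldEigenvalue_algebraMap hs]
  have hkill : schurSpan F {mu | StrictDom mu lam} ≤ (schurSpan F {mu | l < Multiset.card mu}).comap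
      (projector (algebraMap A F q) t S) :=
    schurSpan_le.2 fun mu hmu => projector_schur_mem (fun h => hS.2 ⟨hmu, h⟩)
      fun nu hnu h => hS.2 ⟨strictDom_trans hnu hmu, h⟩
  have hmem := Submodule.smul_mem _ (algebraMap A F ↑u⁻¹) (Submodule.mem_comap.1 (hkill (hP.1 lam)))
  rw [map_sub, hPlam, ← hf, smul_sub, smul_smul, ← map_mul, ← hu, u.inv_mul, map_one, one_smul,
    ← baseChange_smul] at hmem
  exact ⟨_, hmem⟩

theorem exists_aeval_powerSums_macdonald_eq (φ : A →ₐ[K] K) (hs : algebraMap A F s = t⁻¹)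
    (hA : Function.Injective (algebraMap A F)) (hP : IsMacdonaldBasis (algebraMap A F q) t P)
    (hE : macdonaldOp (algebraMap A F q) t (P lam) =
      algebraMap A F (macdonaldEigenvalue q s lam) • P lam)
    (hlam : ∀ mu, StrictDom mu lam → Multiset.card mu ≤ l →
      IsUnit (macdonaldEigenvalue q s lam - macdonaldEigenvalue q s mu))
    (hlam1 : φ (macdonaldEigenvalue q s lam) ≠ 1) (y : Fin l → A)
    (hy : ∀ k : ℕ+, φ ((1 - s ^ (k : ℕ)) * powerSums y k) = 0) :
    ∃ a : A, aeval (powerSums fun i => algebraMap A F (y i)) (P lam) = algebraMap A F a ∧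
      φ a = 0 := by
  have : CharZero F := charZero_of_injective_algebraMap (algebraMap K F).injective
  have hpow : (powerSums fun i => algebraMap A F (y i)) =
      fun k => algebraMap A F (powerSums y k) := by
    ext k
    simp [powerSums]
  obtain ⟨f, hf⟩ := exists_macdonald_sub_baseChange_mem (K := K) hs hP hE hlam
  obtain ⟨g, hg, hgf⟩ := exists_baseChange_eq_macdonaldOp (K := K) (q := q) hs f
  have hPf := aeval_powerSums_eq_zero_of_mem hf fun i => algebraMap A F (y i)
  have hEf := aeval_powerSums_eq_zero_of_mem (macdonaldOp_mem_schurSpan_lt_card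
    (algebraMap A F q) t hf) fun i => algebraMap A F (y i)
  rw [map_sub, hpow, aeval_baseChange, sub_eq_zero] at hPf
  rw [map_sub, hE, ← hg, map_sub, map_smul, hpow, hPf, aeval_baseChange, smul_eq_mul, ← map_mul,
    sub_eq_zero] at hEf
  refine ⟨_, hpow ▸ hPf, ?_⟩
  have hφ := hgf φ _ hy
  rw [← hA hEf, map_mul] at hφ
  exact (mul_left_eq_self₀.1 hφ).resolve_left hlam1

end RegularRepresentative

/-! ### Rectangular partitions -/

section Rectangle

theorem row_replicate {l i : ℕ} (hi : i < l) (r : ℕ+) : row (Multiset.replicate l r) i = r := by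
  have hlen : i < (descParts (Multiset.replicate l r)).length := by
    rwa [length_descParts, Multiset.card_replicate]
  have hmem := List.getElem_mem hlen
  rw [← Multiset.mem_coe, coe_descParts, Multiset.map_replicate] at hmem
  rw [row, List.getD_eq_getElem _ _ hlen]
  exact Multiset.eq_of_mem_replicate hmem

theorem exists_row_ne_row_zero {lam : Multiset ℕ+} {l : ℕ} (hlam : Multiset.card lam ≤ l)
    (h0 : lam ≠ 0) (hr : ¬ ∃ r : ℕ+, lam = Multiset.replicate l r) :
    ∃ i < l, row lam i ≠ row lam 0 := by
  contrapose! hr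
  have hpos : 0 < row lam 0 :=
    Nat.pos_of_ne_zero fun h => h0 (Multiset.card_eq_zero.1 (Nat.le_zero.1 (row_eq_zero_iff.1 h)))
  refine ⟨Nat.toPNat (row lam 0) hpos, row_injective (funext fun i => ?_)⟩
  rcases lt_or_ge i l with hi | hi
  · exact (hr i hi).trans (row_replicate hi (Nat.toPNat (row lam 0) hpos)).symm
  · rw [row_eq_zero_iff.2 (hlam.trans hi),
      row_eq_zero_iff.2 ((Multiset.card_replicate l _).trans_le hi)]

theorem alternant_add_const {B : Type*} [CommRing B] {N : ℕ} (x : Fin N → B) (a : Fin N → ℕ)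
    (r : ℕ) : alternant x (fun i => r + a i) = (∏ i, x i) ^ r * alternant x a := by
  rw [alternant, alternant, ← Finset.prod_pow, ← Matrix.det_mul_row]
  simp only [pow_add, Matrix.of_apply]

variable {R : Type} [Field R] [CharZero R] {B : Type*} [CommRing B] [IsDomain B] [Algebra R B]
  {q t : R} {P : Multiset ℕ+ → SymFn R} {lam : Multiset ℕ+} {l r : ℕ} {y : Fin l → B}

theorem aeval_powerSums_schur_of_row_eq (hlam : Multiset.card lam ≤ l)
    (hr : ∀ i < l, row lam i = r) (hy : Function.Injective y) :
    aeval (powerSums y) (schur lam : SymFn R) = (∏ i, y i) ^ r := by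
  have hrow : (fun i : Fin l => row lam i + (i.rev : ℕ)) = fun i : Fin l => r + (i.rev : ℕ) :=
    funext fun i => by rw [hr i i.2]
  rw [← jacobiTrudi_row_add_rev hlam, map_jacobiTrudi, hrow]
  simp only [Function.comp_def, aeval_X]
  exact mul_right_cancel₀ (alternant_rev_ne_zero hy)
    ((jacobiTrudi_mul_alternant R y _).trans (alternant_add_const y _ r))

theorem aeval_powerSums_macdonald_of_row_eq (hP : IsMacdonaldBasis q t P)
    (hlam : Multiset.card lam ≤ l) (hr : ∀ i < l, row lam i = r) (hy : Function.Injective y) :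
    aeval (powerSums y) (P lam) = (∏ i, y i) ^ r := by
  have hmem : P lam - schur lam ∈ schurSpan R {mu | l < Multiset.card mu} :=
    Submodule.span_mono (Set.image_mono fun mu hmu => lt_card_of_strictDom hlam hr hmu) (hP.1 lam)
  rw [← aeval_powerSums_schur_of_row_eq (R := R) hlam hr hy, ← sub_eq_zero, ← map_sub]
  exact aeval_powerSums_eq_zero_of_mem hmem y

theorem aeval_powerSums_macdonald_eq_zero_of_lt (hP : IsMacdonaldBasis q t P)
    (hlam : l < Multiset.card lam) (y : Fin l → B) : aeval (powerSums y) (P lam) = 0 := by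
  have hmem : P lam - schur lam ∈ schurSpan R {mu | l < Multiset.card mu} :=
    Submodule.span_mono
      (Set.image_mono fun mu hmu => hlam.trans_le (card_le_card_of_strictDom hmu)) (hP.1 lam)
  rw [← aeval_powerSums_schur_eq_zero (R := R) hlam y, ← sub_eq_zero, ← map_sub]
  exact aeval_powerSums_eq_zero_of_mem hmem y

end Rectangle

/-! ### Roots of unity -/

section RootsOfUnity

variable {k : Type*} [CommRing k] {ζ : k} {l : ℕ}

theorem geom_sum_ne_zero_of_lt (hζ : IsPrimitiveRoot ζ l) {n : ℕ} (hn : 0 < n) (hnl : n < l) :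
    ∑ i ∈ Finset.range n, ζ ^ i ≠ 0 := fun h => by
  have hgeom := mul_neg_geom_sum ζ n
  rw [h, mul_zero, eq_comm, sub_eq_zero] at hgeom
  exact hζ.pow_ne_one_of_pos_of_lt hn.ne' hnl hgeom.symm

variable [IsDomain k]

theorem powerSums_pow_eq_zero (hζ : IsPrimitiveRoot ζ l) {n : ℕ+} (hn : ¬ l ∣ n) :
    powerSums (fun i : Fin l => ζ ^ (i : ℕ)) n = 0 := by
  have hgeom := mul_neg_geom_sum (ζ ^ (n : ℕ)) l
  rw [pow_right_comm, hζ.pow_eq_one, one_pow, sub_self] at hgeom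
  rw [powerSums, Fin.sum_univ_eq_sum_range fun i => (ζ ^ i) ^ (n : ℕ)]
  simp only [pow_right_comm ζ _ (n : ℕ)]
  exact (mul_eq_zero.1 hgeom).resolve_left
    (sub_ne_zero.2 fun h => hn ((hζ.pow_eq_one_iff_dvd _).1 h.symm))

theorem prod_pow_eq_neg_one_pow (hζ : IsPrimitiveRoot ζ l) :
    ∏ i : Fin l, ζ ^ (i : ℕ) = (-1) ^ (l - 1) := by
  rw [Fin.prod_univ_eq_prod_range fun i => ζ ^ i, Finset.prod_pow_eq_pow_sum, Finset.sum_range_id]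
  obtain ⟨m, rfl | rfl⟩ := l.even_or_odd'
  · rcases m.eq_zero_or_pos with rfl | hm
    · simp
    · have hneg : ζ ^ m = -1 :=
        (hζ.pow (by omega) (mul_comm 2 m)).eq_neg_one_of_two_right
      rw [mul_assoc, Nat.mul_div_cancel_left _ two_pos, pow_mul, hneg]
  · rw [Nat.add_sub_cancel, mul_left_comm, Nat.mul_div_cancel_left _ two_pos, pow_mul,
      hζ.pow_eq_one, one_pow, pow_mul, neg_one_sq, one_pow]

theorem exists_filter_eq_Ico {a : ℕ → ℕ} (ha : Antitone a) {j l : ℕ} (hj : j < l) :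
    ∃ e, j < e ∧ e ≤ l ∧ {i ∈ Finset.Ico j l | a i = a j} = Finset.Ico j e := by
  let m := Nat.findGreatest (fun i => a i = a j) (l - 1)
  have hm : a m = a j :=
    Nat.findGreatest_spec (P := fun i => a i = a j) (Nat.le_sub_one_of_lt hj) rfl
  have hml : m ≤ l - 1 := Nat.findGreatest_le _
  have hjm : j ≤ m := Nat.le_findGreatest (Nat.le_sub_one_of_lt hj) rfl
  refine ⟨m + 1, by omega, by omega, ?_⟩
  ext i
  simp only [Finset.mem_filter, Finset.mem_Ico]
  constructor
  · rintro ⟨⟨hji, hil⟩, hi⟩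
    exact ⟨hji, Nat.lt_succ_of_le (Nat.le_findGreatest (Nat.le_sub_one_of_lt hil) hi)⟩
  · rintro ⟨hji, him⟩
    exact ⟨⟨hji, by omega⟩, le_antisymm (ha hji) (hm ▸ ha (Nat.le_of_lt_succ him))⟩

/-- The coefficient at `a j` is the sum of fewer than `l` consecutive powers of `ζ`. -/
theorem sum_C_mul_X_pow_sub_ne_zero (hζ : IsPrimitiveRoot ζ l) {a b : ℕ → ℕ} (ha : Antitone a)
    (hb : Antitone b) (hconst : ∃ i < l, a i ≠ a 0) {j : ℕ} (hj : j < l) (heq : ∀ i < j, b i = a i)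
    (hlt : b j < a j) :
    ∑ i ∈ Finset.range l,
      Polynomial.C (ζ ^ i) * (Polynomial.X ^ a i - Polynomial.X ^ b i) ≠ 0 := fun h0 => by
  obtain ⟨e, hje, hel, hfilter⟩ := exists_filter_eq_Ico ha hj
  have hlen : e - j < l := by
    obtain ⟨i, hi, hne⟩ := hconst
    by_contra! hle
    obtain rfl : j = 0 := by omega
    have : i ∈ Finset.Ico 0 e := Finset.mem_Ico.2 ⟨i.zero_le, by omega⟩
    rw [← hfilter, Finset.mem_filter] at this
    exact hne this.2
  have hcoeff (i : ℕ) (hi : i ∈ Finset.range l) :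
      (Polynomial.C (ζ ^ i) * (Polynomial.X ^ a i - Polynomial.X ^ b i)).coeff (a j) =
        if i ∈ Finset.Ico j e then ζ ^ i else 0 := by
    rw [← hfilter]
    simp only [Polynomial.coeff_C_mul, Polynomial.coeff_sub, Polynomial.coeff_X_pow,
      Finset.mem_filter, Finset.mem_Ico]
    rcases lt_or_ge i j with hij | hij
    · simp [heq i hij, hij.not_ge]
    · have : a j ≠ b i := ((hb hij).trans_lt hlt).ne'
      simp [this, hij, Finset.mem_range.1 hi, eq_comm]
  have hcoeff0 := congrArg (Polynomial.coeff · (a j)) h0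
  simp only [Polynomial.finsetSum_coeff, Polynomial.coeff_zero] at hcoeff0
  rw [Finset.sum_congr rfl hcoeff, Finset.sum_ite_mem, Finset.inter_eq_right.2 fun i hi =>
      Finset.mem_range.2 ((Finset.mem_Ico.1 hi).2.trans_le hel),
    Finset.sum_Ico_eq_sum_range] at hcoeff0
  simp only [pow_add, ← Finset.mul_sum] at hcoeff0
  exact mul_ne_zero (pow_ne_zero _ (hζ.ne_zero (by omega)))
    (geom_sum_ne_zero_of_lt hζ (by omega) hlen) hcoeff0

end RootsOfUnity

section Eigenvalues

variable {K : Type*} [Field K]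

theorem macdonaldEigenvalue_zero (q s : K) : macdonaldEigenvalue q s 0 = 1 :=
  add_eq_left.2 (Finset.sum_eq_zero fun i _ => (Nat.not_lt_zero _ i.2).elim)

variable [CharZero K] {q ζ : K} {l : ℕ} {lam mu : Multiset ℕ+}

theorem sum_pow_mul_pow_sub_ne_zero (hq : Transcendental ℚ q) (hζ : IsPrimitiveRoot ζ l)
    {a b : ℕ → ℕ} (ha : Antitone a) (hb : Antitone b) (hconst : ∃ i < l, a i ≠ a 0) {j : ℕ}
    (hj : j < l) (heq : ∀ i < j, b i = a i) (hlt : b j < a j) :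
    ∑ i ∈ Finset.range l, ζ ^ i * (q ^ a i - q ^ b i) ≠ 0 := by
  have hl : 0 < l := by omega
  let z : algebraicClosure ℚ K :=
    ⟨ζ, mem_algebraicClosure_iff.2 (hζ.isIntegral hl).tower_top.isAlgebraic⟩
  have hz : IsPrimitiveRoot z l := IsPrimitiveRoot.coe_submonoidClass_iff.1 hζ
  have hp := sum_C_mul_X_pow_sub_ne_zero hz ha hb hconst hj heq hlt
  refine fun h0 => hp (transcendental_iff.1 hq.algebraicClosure _ ?_)
  simpa [z] using h0

theorem macdonaldEigenvalue_ne (hq : Transcendental ℚ q) (hζ : IsPrimitiveRoot ζ l)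
    (hlam : Multiset.card lam ≤ l) (hmu : Multiset.card mu ≤ l)
    (hconst : ∃ i < l, row lam i ≠ row lam 0) {j : ℕ} (heq : ∀ i < j, row mu i = row lam i)
    (hlt : row mu j < row lam j) :
    macdonaldEigenvalue q ζ lam ≠ macdonaldEigenvalue q ζ mu := by
  have hj : j < l := by
    by_contra! h
    rw [row_eq_zero_iff.2 (hlam.trans h)] at hlt
    exact Nat.not_lt_zero _ hlt
  have hl : 1 < l := by
    obtain ⟨i, hi, hne⟩ := hconst
    have : i ≠ 0 := fun h => hne (h ▸ rfl)
    omega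
  rw [← sub_ne_zero, ← eigenvalue_row q ζ hlam, ← eigenvalue_row q ζ hmu,
    eigenvalue_sub_eigenvalue,
    Fin.sum_univ_eq_sum_range fun i => ζ ^ i * (q ^ row lam i - q ^ row mu i)]
  exact mul_ne_zero (sub_ne_zero.2 (hζ.ne_one hl).symm) (sum_pow_mul_pow_sub_ne_zero hq hζ
    (antitone_row lam) (antitone_row mu) hconst hj heq hlt)

theorem macdonaldEigenvalue_ne_one (hq : Transcendental ℚ q) (hζ : IsPrimitiveRoot ζ l)
    (hlam : Multiset.card lam ≤ l) (hconst : ∃ i < l, row lam i ≠ row lam 0) :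
    macdonaldEigenvalue q ζ lam ≠ 1 := by
  have hpos : row 0 0 < row lam 0 := by
    obtain ⟨i, -, hne⟩ := hconst
    have hzero : row 0 0 = 0 := row_eq_zero_iff.2 (Nat.zero_le _)
    rw [hzero]
    exact (Nat.zero_le _).trans_lt ((antitone_row lam i.zero_le).lt_of_ne hne)
  rw [← macdonaldEigenvalue_zero q ζ]
  exact macdonaldEigenvalue_ne hq hζ hlam l.zero_le hconst
    (fun i hi => (Nat.not_lt_zero i hi).elim) hpos

end Eigenvalues

section RegularAt

variable {K : Type*} [Field K] {w : K}

/-- The subalgebra of `K(t)` of rational functions without a pole at `t = w`. -/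
def regularAt (w : K) : Subalgebra K (RatFunc K) where
  carrier := {x | (RatFunc.denom x).eval₂ (RingHom.id K) w ≠ 0}
  mul_mem' {x y} hx hy h :=
    mul_ne_zero hx hy <| by
      rw [← Polynomial.eval₂_mul]
      exact Polynomial.eval₂_eq_zero_of_dvd_of_eval₂_eq_zero _ _ (RatFunc.denom_mul_dvd x y) h
  add_mem' {x y} hx hy h :=
    mul_ne_zero hx hy <| by
      rw [← Polynomial.eval₂_mul]
      exact Polynomial.eval₂_eq_zero_of_dvd_of_eval₂_eq_zero _ _ (RatFunc.denom_add_dvd x y) h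
  algebraMap_mem' c := by simp [RatFunc.algebraMap_eq_C]

/-- Evaluation at `t = w` of a rational function without a pole there. -/
def evalAt (w : K) : regularAt w →ₐ[K] K where
  toFun x := RatFunc.eval (RingHom.id K) w x
  map_one' := RatFunc.eval_one _ _
  map_mul' x y := RatFunc.eval_mul _ _ x.2 y.2
  map_zero' := RatFunc.eval_zero _ _
  map_add' x y := RatFunc.eval_add _ _ x.2 y.2
  commutes' _ := RatFunc.eval_C _ _

theorem evalAt_apply (x : regularAt w) : evalAt w x = RatFunc.eval (RingHom.id K) w x := rfl

theorem inv_mem_regularAt {x : RatFunc K} (hx : RatFunc.eval (RingHom.id K) w x ≠ 0) :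
    x⁻¹ ∈ regularAt w := fun h => by
  have hx0 : x ≠ 0 := by
    rintro rfl
    exact hx (RatFunc.eval_zero _ _)
  refine hx ?_
  rw [RatFunc.eval, Polynomial.eval₂_eq_zero_of_dvd_of_eval₂_eq_zero _ _
    (RatFunc.denom_inv_dvd hx0) h, zero_div]

instance : IsLocalHom (evalAt w) where
  map_nonunit x hx := by
    have hx0 : (x : RatFunc K) ≠ 0 := by
      intro h
      exact hx.ne_zero (by rw [evalAt_apply, h, RatFunc.eval_zero])
    exact IsUnit.of_mul_eq_one ⟨_, inv_mem_regularAt hx.ne_zero⟩ (Subtype.ext (mul_inv_cancel₀ hx0))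

/-- The element `t⁻¹` of `regularAt w`. -/
def invX (hw : w ≠ 0) : regularAt w := ⟨RatFunc.X⁻¹, inv_mem_regularAt (by simpa using hw)⟩

theorem evalAt_invX (hw : w ≠ 0) : evalAt w (invX hw) = w⁻¹ := by
  have hX : (RatFunc.X : RatFunc K) ∈ regularAt w := by
    change Polynomial.eval₂ _ _ _ ≠ 0
    simp
  have hmul : (⟨RatFunc.X, hX⟩ : regularAt w) * invX hw = 1 :=
    Subtype.ext (mul_inv_cancel₀ RatFunc.X_ne_zero)
  have heval := congrArg (evalAt w) hmul
  rw [map_mul, map_one, evalAt_apply, RatFunc.eval_X] at heval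
  exact eq_inv_of_mul_eq_one_right heval

end RegularAt

section RootsOfUnitySpecialization

theorem pow_ne_one_of_transcendental {R A : Type*} [CommRing R] [Nontrivial R] [CommRing A]
    [Algebra R A] {x : A} (hx : Transcendental R x) (n : ℕ+) : x ^ (n : ℕ) ≠ 1 := fun h =>
  hx.pow n.pos (h ▸ isAlgebraic_one)

theorem transcendental_rat_of_transcendental {k K : Type*} [Field k] [Field K] [CharZero K]
    [Algebra k K] {x : K} (hx : Transcendental k x) : Transcendental ℚ x :=
  have := (algebraMap k K).charZero
  hx.of_tower_top ℚ

theorem map_one_sub_pow_mul_powerSums_eq_zero {K A : Type*} [Field K] [CommRing A] [Algebra K A]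
    {ζ : K} {s : A} {l : ℕ} (φ : A →ₐ[K] K) (hζ : IsPrimitiveRoot ζ l) (hφs : φ s = ζ⁻¹)
    (k : ℕ+) :
    φ ((1 - s ^ (k : ℕ)) * powerSums (fun i : Fin l => algebraMap K A (ζ ^ (i : ℕ))) k) = 0 := by
  have hmap : φ (powerSums (fun i : Fin l => algebraMap K A (ζ ^ (i : ℕ))) k) =
      powerSums (fun i : Fin l => ζ ^ (i : ℕ)) k := by
    simp [powerSums]
  rw [map_mul, hmap, map_sub, map_one, map_pow, hφs]
  by_cases hk : l ∣ k
  · rw [(hζ.inv.pow_eq_one_iff_dvd _).2 hk, sub_self, zero_mul]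
  · rw [powerSums_pow_eq_zero hζ hk, mul_zero]

theorem exists_aeval_powerSums_pow_macdonald_eq {K A F : Type} [Field K] [CharZero K] [CommRing A]
    [Field F] [Algebra K A] [Algebra A F] [Algebra K F] [IsScalarTower K A F] {q ζ : K} {s : A}
    {t : F} {P : Multiset ℕ+ → SymFn F} {l : ℕ} {lam : Multiset ℕ+} (φ : A →ₐ[K] K) [IsLocalHom φ]
    (hq : Transcendental ℚ q) (hζ : IsPrimitiveRoot ζ l) (ht : Transcendental K t)
    (hs : algebraMap A F s = t⁻¹) (hφs : φ s = ζ⁻¹) (hA : Function.Injective (algebraMap A F))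
    (hP : IsMacdonaldBasis (algebraMap K F q) t P) (hlam : Multiset.card lam ≤ l)
    (hconst : ∃ i < l, row lam i ≠ row lam 0) :
    ∃ a : A, aeval (powerSums fun i : Fin l => algebraMap K F ζ ^ (i : ℕ)) (P lam) =
      algebraMap A F a ∧ φ a = 0 := by
  have : CharZero F := charZero_of_injective_algebraMap (algebraMap K F).injective
  have hqF : algebraMap K F q = algebraMap A F (algebraMap K A q) :=
    IsScalarTower.algebraMap_apply K A F q
  have heval (mu : Multiset ℕ+) : φ (macdonaldEigenvalue (algebraMap K A q) s mu) =
      macdonaldEigenvalue q ζ⁻¹ mu := by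
    rw [← AlgHom.coe_toRingHom, map_macdonaldEigenvalue, AlgHom.coe_toRingHom, hφs, φ.commutes,
      Algebra.algebraMap_self_apply]
  have ht0 : t ≠ 0 := by
    rintro rfl
    exact ht isAlgebraic_zero
  have hE := macdonaldOp_macdonald ht0
    (fun k h => pow_ne_one_of_transcendental hq k ((algebraMap K F).injective (by simpa using h)))
    (pow_ne_one_of_transcendental ht) hP lam
  rw [hqF, macdonaldEigenvalue_algebraMap hs] at hE
  have hunit (mu : Multiset ℕ+) (hmu : StrictDom mu lam) (hl : Multiset.card mu ≤ l) :
      IsUnit (macdonaldEigenvalue (algebraMap K A q) s lam -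
        macdonaldEigenvalue (algebraMap K A q) s mu) := by
    obtain ⟨j, heq, hlt⟩ := exists_row_lt_row_of_strictDom hmu
    refine isUnit_of_map_unit φ _ (Ne.isUnit ?_)
    rw [map_sub, heval, heval, sub_ne_zero]
    exact macdonaldEigenvalue_ne hq hζ.inv hlam hl hconst heq hlt
  have hne : φ (macdonaldEigenvalue (algebraMap K A q) s lam) ≠ 1 := by
    rw [heval]
    exact macdonaldEigenvalue_ne_one hq hζ.inv hlam hconst
  simpa only [← IsScalarTower.algebraMap_apply, map_pow] using
    exists_aeval_powerSums_macdonald_eq φ hs hA (hqF ▸ hP) hE hunit hne _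
      (map_one_sub_pow_mul_powerSums_eq_zero φ hζ hφs)

theorem eval_macdonald_eq_zero {K : Type} [Field K] [CharZero K] {q ζ : K}
    {P : Multiset ℕ+ → SymFn (RatFunc K)} {l : ℕ} {lam : Multiset ℕ+} (hq : Transcendental ℚ q)
    (hζ : IsPrimitiveRoot ζ l) (hP : IsMacdonaldBasis (RatFunc.C q) RatFunc.X P)
    (hlam : Multiset.card lam ≤ l) (hconst : ∃ i < l, row lam i ≠ row lam 0) :
    RatFunc.eval (RingHom.id K) ζ
      (aeval (powerSums fun i : Fin l => RatFunc.C ζ ^ (i : ℕ)) (P lam)) = 0 := by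
  have hζ0 : ζ ≠ 0 := hζ.ne_zero (by omega)
  obtain ⟨a, ha, ha0⟩ := exists_aeval_powerSums_pow_macdonald_eq (evalAt ζ) hq hζ
    (RatFunc.transcendental_X (K := K)) (s := invX hζ0) rfl (evalAt_invX hζ0) Subtype.val_injective
    hP hlam hconst
  exact (congrArg _ ha).trans ha0

theorem macEvalRoots_eq (l : ℕ) (z : ℂ) (f : SymFn FF) :
    macEvalRoots l z f = RatFunc.eval (RingHom.id KK) (RatFunc.C z)
      (aeval (powerSums fun i : Fin l => (RatFunc.C (RatFunc.C z) : FF) ^ (i : ℕ)) f) := by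
  rw [macEvalRoots, evalT]
  congr 3
  ext k
  rw [powerSums, Finset.sum_range]
  simp only [pow_mul]

end RootsOfUnitySpecialization

end Macdonald

open Macdonald in
theorem macdonald_P_roots_of_unity_general {K : Type} [Field K] [CharZero K] {q ζ : K} {l : ℕ}
    (hq : Transcendental ℚ q) (hζ : IsPrimitiveRoot ζ l) {P : Multiset ℕ+ → SymFn (RatFunc K)}
    (hP : IsMacdonaldBasis (RatFunc.C q) RatFunc.X P) (lam : Multiset ℕ+) :
    let value := RatFunc.eval (RingHom.id K) ζ
      (aeval (powerSums fun i : Fin l => (RatFunc.C ζ : RatFunc K) ^ (i : ℕ)) (P lam))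
    (lam = 0 → value = 1) ∧
    (∀ r : ℕ+, lam = Multiset.replicate l r → value = (-1) ^ ((l - 1) * (r : ℕ))) ∧
    (lam ≠ 0 → (¬ ∃ r : ℕ+, lam = Multiset.replicate l r) → value = 0) := by
  have hζF : IsPrimitiveRoot (RatFunc.C ζ) l := hζ.map_of_injective RatFunc.C_injective
  have hinj : Function.Injective fun i : Fin l => (RatFunc.C ζ : RatFunc K) ^ (i : ℕ) :=
    fun i j hij => Fin.ext (hζF.pow_inj i.2 j.2 hij)
  intro value
  have hconst {r : ℕ} (hlam : Multiset.card lam ≤ l) (hr : ∀ i < l, row lam i = r) :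
      value = (-1) ^ ((l - 1) * r) := by
    simp only [value]
    rw [aeval_powerSums_macdonald_of_row_eq hP hlam hr hinj,
      prod_pow_eq_neg_one_pow hζF, ← pow_mul]
    simpa using RatFunc.eval_C (RingHom.id K) ζ (c := (-1) ^ ((l - 1) * r))
  refine ⟨?_, ?_, fun h0 hr => ?_⟩
  · rintro rfl
    simpa using hconst l.zero_le fun i _ => row_eq_zero_iff.2 i.zero_le
  · rintro r rfl
    exact hconst (Multiset.card_replicate l r).le fun i hi => row_replicate hi r
  · rcases le_or_gt (Multiset.card lam) l with hlam | hlam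
    · exact eval_macdonald_eq_zero hq hζ hP hlam (exists_row_ne_row_zero hlam h0 hr)
    · simp only [value]
      rw [aeval_powerSums_macdonald_eq_zero_of_lt hP hlam, RatFunc.eval_zero]

/-- **Specialization of `P_λ` at the alphabet of `l`-th roots of unity and `t = ζ`**
(Corollary 3.2 of the paper).  Let `l > 0`, `λ` a partition with at most `l` parts, and
`ζ` a primitive `l`-th root of unity.  Then `P_λ(1, ζ, ζ², …, ζ^{l-1}; q, ζ)` equals
`(-1)^{(l-1)r}` if `λ = (r^l)` for some `r ≥ 0` (including the empty partition for `r = 0`),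
and equals `0` otherwise. -/
theorem macdonald_P_roots_of_unity
    (l : ℕ) (hl : 0 < l) (zeta : ℂ) (hzeta : IsPrimitiveRoot zeta l)
    (P : Multiset ℕ+ → SymFn FF) (hP : IsMacdonaldBasis qF tF P)
    (lam : Multiset ℕ+) (hlen : Multiset.card lam ≤ l) :
    (lam = 0 → macEvalRoots l zeta (P lam) = 1) ∧
    (∀ r : ℕ+, lam = Multiset.replicate l r →
        macEvalRoots l zeta (P lam) = (-1 : KK) ^ ((l - 1) * (r : ℕ))) ∧
    (lam ≠ 0 → (¬ ∃ r : ℕ+, lam = Multiset.replicate l r) →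
        macEvalRoots l zeta (P lam) = 0) := by
  have hroot : IsPrimitiveRoot (RatFunc.C zeta) l := hzeta.map_of_injective RatFunc.C_injective
  have hq : Transcendental ℂ qK := RatFunc.transcendental_X
  simpa only [Macdonald.macEvalRoots_eq] using macdonald_P_roots_of_unity_general
    (Macdonald.transcendental_rat_of_transcendental hq) hroot hP lam
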